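/- (Newton's formula for gl(m|n)) As Laurent series in T with coefficients in Z(U(gl(m|n))): C_{m|n}(T−(m−n)) / C_{m|n}(T−(m−n)+1) = 1 − Σ_{k=0}^∞ G_k^{gl(m|n)} T^{−1−k}. -/

import Mathlib

set_option maxHeartbeats 1000000
set_option synthInstance.maxHeartbeats 400000

noncomputable section
open scoped TensorProduct

/-- The index set `I = {1,…,m,1̄,…,n̄}` of `gl(m|n)`; `Sum.inl` are the even
(unbarred) indices, `Sum.inr` the odd (barred) ones.  The index set
`Î = {0} ∪ I` of `gl(m+1|n)` is realized as `Ind (m+1) n`, with `0 = Sum.inl 0`. -/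
abbrev Ind (m n : ℕ) := Fin m ⊕ Fin n

/-- Parity of an index, as `0` or `1`. -/
def pI {m n : ℕ} : Ind m n → ℕ := Sum.elim (fun _ => 0) (fun _ => 1)

/-- The total order `1 < ⋯ < m < 1̄ < ⋯ < n̄` on `I` (and, with `m+1` in place of `m`,
the order `0 < 1 < ⋯ < m < 1̄ < ⋯ < n̄` on `Î`). -/
def iltI {m n : ℕ} : Ind m n → Ind m n → Prop
  | Sum.inl a, Sum.inl b => a < b
  | Sum.inl _, Sum.inr _ => True
  | Sum.inr _, Sum.inl _ => False
  | Sum.inr a, Sum.inr b => a < b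

/-- The distinguished index `0` of `Î`. -/
def z0 {m n : ℕ} : Ind (m+1) n := Sum.inl 0

/-- The inclusion `I ↪ Î`. -/
def emb {m n : ℕ} : Ind m n → Ind (m+1) n := Sum.map Fin.succ id

lemma emb_injective {m n : ℕ} : Function.Injective (emb (m := m) (n := n)) := by
  intro a b h
  cases a <;> cases b <;> simp [emb, Fin.succ_inj] at h <;> simp [h]

lemma emb_ne_z0 {m n : ℕ} (a : Ind m n) : emb a ≠ z0 := by
  cases a <;> simp [emb, z0, Fin.succ_ne_zero]

/-- Builds a linear map out of a space with basis `α` from a function on basis vectors. -/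
def mkOp {α M : Type} [AddCommGroup M] [Module ℂ M] (g : α → M) : (α →₀ ℂ) →ₗ[ℂ] M :=
  Finsupp.lsum ℂ fun x => LinearMap.toSpanSingleton ℂ M (g x)

/-- Number of odd variables occurring before position `i`. -/
def cntB {n : ℕ} (b : Fin n → Bool) (i : Fin n) : ℕ :=
  (Finset.univ.filter fun j => j < i ∧ b j = true).card

/-- Number of odd variables occurring. -/
def cntA {n : ℕ} (b : Fin n → Bool) : ℕ := (Finset.univ.filter fun j => b j = true).card


/-- The defining (super-)commutation relations of `gl`:
`e_ij e_kl − (−1)^{(|i|+|j|)(|k|+|l|)} e_kl e_ij = δ_jk e_il − (−1)^{(|i|+|j|)(|k|+|l|)} δ_li e_kj`. -/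
inductive glRel (ι : Type) (p : ι → ℕ) [DecidableEq ι] :
    FreeAlgebra ℂ (ι × ι) → FreeAlgebra ℂ (ι × ι) → Prop
  | basic (i j k l : ι) : glRel ι p
      (FreeAlgebra.ι ℂ (i, j) * FreeAlgebra.ι ℂ (k, l)
        - ((-1 : ℂ) ^ ((p i + p j) * (p k + p l))) •
            (FreeAlgebra.ι ℂ (k, l) * FreeAlgebra.ι ℂ (i, j)))
      ((if j = k then FreeAlgebra.ι ℂ (i, l) else 0)
        - ((-1 : ℂ) ^ ((p i + p j) * (p k + p l))) •
            (if l = i then FreeAlgebra.ι ℂ (k, j) else 0))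

/-- The universal enveloping superalgebra of the general linear Lie superalgebra with
index set `ι` and parity `p`, presented by generators `e_ij` and the super-commutator
relations. -/
abbrev UEA (ι : Type) (p : ι → ℕ) [DecidableEq ι] : Type := RingQuot (glRel ι p)

/-- The generator `e_ij` of `UEA ι p`. -/
def gen {ι : Type} (p : ι → ℕ) [DecidableEq ι] (i j : ι) : UEA ι p :=
  RingQuot.mkAlgHom ℂ (glRel ι p) (FreeAlgebra.ι ℂ (i, j))

/-- The chain `a, v_1, …, v_k, b`. -/
def chainF {ι : Type} (a b : ι) {k : ℕ} (v : Fin k → ι) : Fin (k+2) → ι :=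
  Fin.cons a (Fin.snoc v b)

/-- The elements `r_k(a,b) = Σ (−1)^{|i_1|+⋯+|i_{k-1}|} e_{a i_1} e_{i_1 i_2} ⋯ e_{i_{k-1} b}`,
with `r_0(a,b) = δ_{ab}(−1)^{|a||b|}`. -/
def rElt {ι A : Type} [Fintype ι] [DecidableEq ι] [Ring A] [Algebra ℂ A]
    (e : ι → ι → A) (p : ι → ℕ) : ℕ → ι → ι → A
  | 0 => fun a b => if a = b then ((-1 : ℂ) ^ (p a * p b)) • (1 : A) else 0
  | (k+1) => fun a b => ∑ v : Fin k → ι, ((-1 : ℂ) ^ (∑ t, p (v t))) •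
      (List.ofFn fun t : Fin (k+1) =>
        e (chainF a b v t.castSucc) (chainF a b v t.succ)).prod

/-- The Gelfand invariants `G_k = Σ_i r_k(i,i)` (for `k ≥ 1`). -/
def gelf {ι A : Type} [Fintype ι] [DecidableEq ι] [Ring A] [Algebra ℂ A]
    (e : ι → ι → A) (p : ι → ℕ) (k : ℕ) : A :=
  ∑ i : ι, rElt e p k i i

/-- The algebra of Laurent-type series in `T` with coefficients in `A`: Hahn series over `ℤ`,
where the exponent `k` records the power `T^{-k}` (so that supports of honest Laurent series
in `T^{-1}`, with finitely many positive powers of `T`, are well-ordered). -/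
abbrev TSer (A : Type) [Ring A] := HahnSeries ℤ A

/-- The variable `T`. -/
def Tv {A : Type} [Ring A] : TSer A := HahnSeries.single (-1 : ℤ) (1 : A)

/-- The matrix `𝔈 = ((−1)^{|i|} e_{ij})_{i,j∈I}` with entries in `A`, as a matrix of constant
series. -/
def scrE (m n : ℕ) {A : Type} [Ring A] [Algebra ℂ A] (e : Ind m n → Ind m n → A) :
    Matrix (Ind m n) (Ind m n) (TSer A) :=
  fun i j => HahnSeries.C (((-1 : ℂ) ^ (pI i)) • e i j)

/-- The Capelli Berezinian
`C_{m|n}(v) = Det[(𝔈−v−i+1)_{ij}]_{i,j≤m} ⬝ Det[((𝔈−v−m+i)^{−1})^{st}_{ij}]_{m<i,j≤m+n}`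
of the matrix `E`, evaluated at the series `v`.  Here `Det` denotes the column determinant
`Σ_σ sgn(σ) X_{σ(1),1}⋯X_{σ(N),N}`, matrix inverses are taken in the matrix ring over the
Laurent series algebra (via `Ring.inverse`), and the supertransposition signs
`(−1)^{|i|(|j|+1)}` are equal to `1` on the odd-odd block. -/
def capelli {m n : ℕ} {A : Type} [Ring A] [Algebra ℂ A]
    (E : Matrix (Ind m n) (Ind m n) (TSer A)) (v : TSer A) : TSer A :=
  (∑ σ : Equiv.Perm (Fin m), ((Equiv.Perm.sign σ : ℤˣ) : ℤ) •
      (List.ofFn fun t : Fin m =>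
        E (Sum.inl (σ t)) (Sum.inl t)
          - (if σ t = t then v + (((t : ℕ) : ℂ) • 1) else 0)).prod)
  * (∑ τ : Equiv.Perm (Fin n), ((Equiv.Perm.sign τ : ℤˣ) : ℤ) •
      (List.ofFn fun t : Fin n =>
        (Ring.inverse
          (E - (v + ((((m : ℂ) - ((t : ℕ) : ℂ)) - 1) • 1)) •
            (1 : Matrix (Ind m n) (Ind m n) (TSer A))))
          (Sum.inr t) (Sum.inr (τ t))).prod)

/-- The series `Σ_{k=0}^∞ G_k T^{−1−k}` of Gelfand invariants, with `G_0 = m−n`. -/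
def GelSer (m n : ℕ) : TSer (UEA (Ind m n) pI) :=
  (HahnSeries.ofPowerSeries ℤ (UEA (Ind m n) pI)
    (PowerSeries.mk fun k => match k with
      | 0 => ((m : ℤ) - n) • (1 : UEA (Ind m n) pI)
      | (k+1) => gelf (gen pI) pI (k+1))) * HahnSeries.single (1 : ℤ) 1

/-! The resolvents `(E + c - T)⁻¹` of a `gl(m|n)` matrix satisfy the RTT relation. Hence both
factors of the Capelli Berezinian are column determinants of Manin matrices, and cofactor expansion
peels off one index at a time, as a corner entry of a resolvent of a smaller block. The Newton
series `1 + str (E + c - T)⁻¹` of the nested blocks satisfy a one-step recursion through the same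
corner entries, so the ratio of Berezinians telescopes, first over the even and then over the odd
indices. At `c = 0` the Newton series is `1 - ∑ str (E ^ k) T ^ (-1 - k)`. -/

section GlRelations

variable {R ι κ : Type*} [Ring R]

/-- The supertrace `∑ (-1)^{|i|} M i i`. -/
def strace [Fintype ι] (p : ι → ℕ) (M : Matrix ι ι R) : R := ∑ i, (-1 : ℤ) ^ p i • M i i

lemma strace_submatrix_equiv [Fintype ι] [Fintype κ] (p : ι → ℕ) (M : Matrix ι ι R)
    (e : κ ≃ ι) : strace (p ∘ e) (M.submatrix e e) = strace p M :=
  e.sum_comp fun i => (-1 : ℤ) ^ p i • M i i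

lemma neg_one_pow_smul_smul (q : ℕ) (x : R) : (-1 : ℤ) ^ q • (-1 : ℤ) ^ q • x = x := by
  rw [smul_smul, ← mul_pow, neg_one_mul, neg_neg, one_pow, one_smul]

variable [DecidableEq ι] [DecidableEq κ]

/-- The entries of `E` satisfy the relations of the generators `(-1)^{|i|} e_{ij}` of
`gl(ι)`, where `p i` is the parity of the index `i`. -/
def IsGl (p : ι → ℕ) (E : Matrix ι ι R) : Prop :=
  ∀ i j k l, E i j * E k l =
    (-1 : ℤ) ^ ((p i + p j) * (p k + p l)) • (E k l * E i j)
      + (if j = k then (-1 : ℤ) ^ p k • E i l else 0)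
      - (if l = i then (-1 : ℤ) ^ ((p i + p j) * (p k + p l) + p i) • E k j else 0)

lemma IsGl.submatrix {p : ι → ℕ} {E : Matrix ι ι R} (hE : IsGl p E) {f : κ → ι}
    (hf : Function.Injective f) : IsGl (p ∘ f) (E.submatrix f f) := fun i j k l => by
  simpa only [Matrix.submatrix_apply, Function.comp_apply, hf.eq_iff] using
    hE (f i) (f j) (f k) (f l)

lemma IsGl.map {S : Type*} [Ring S] {p : ι → ℕ} {E : Matrix ι ι R} (hE : IsGl p E)
    (φ : R →+* S) : IsGl p (E.map φ) := fun i j k l => by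
  simpa only [Matrix.map_apply, map_mul, map_sub, map_add, map_zsmul, apply_ite φ, map_zero] using
    congrArg φ (hE i j k l)

lemma single_one_mul_apply [Fintype ι] (M : Matrix ι ι R) (i j k l : ι) :
    (Matrix.single i j (1 : R) * M : Matrix ι ι R) k l = if k = i then M j l else 0 := by
  split_ifs with h
  · rw [h, Matrix.single_mul_apply_same, one_mul]
  · exact Matrix.single_mul_apply_of_ne _ _ _ _ _ h _

lemma mul_single_one_apply [Fintype ι] (M : Matrix ι ι R) (i j k l : ι) :
    (M * Matrix.single i j (1 : R) : Matrix ι ι R) k l = if j = l then M k i else 0 := by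
  split_ifs with h
  · rw [← h, Matrix.mul_single_apply_same, mul_one]
  · exact Matrix.mul_single_apply_of_ne _ _ _ _ _ (Ne.symm h) _

lemma mul_single_one_mul_apply [Fintype ι] (M N : Matrix ι ι R) (i j k l : ι) :
    (M * Matrix.single i j (1 : R) * N : Matrix ι ι R) k l = M k i * N j l := by
  rw [mul_assoc, Matrix.mul_apply]
  simp [single_one_mul_apply]

/-- Conjugation by the diagonal matrix `((-1)^{q |i|})`, as a ring endomorphism: the effect of
moving an element of parity `q` past the entries of an even matrix. -/
def parityTwist [Fintype ι] (p : ι → ℕ) (q : ℕ) : Matrix ι ι R →+* Matrix ι ι R where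
  toFun M := Matrix.of fun i j => (-1 : ℤ) ^ (q * (p i + p j)) • M i j
  map_one' := by
    ext i j
    rcases eq_or_ne i j with rfl | hij
    · simp
    · simp [hij]
  map_zero' := by ext; simp
  map_add' M N := by ext; simp
  map_mul' M N := by
    ext i j
    simp only [Matrix.of_apply, Matrix.mul_apply, Finset.smul_sum, smul_mul_smul_comm, ← pow_add]
    refine Finset.sum_congr rfl fun k _ => congrArg (· • _) (neg_one_pow_congr ?_)
    grind

@[simp]
lemma parityTwist_apply [Fintype ι] (p : ι → ℕ) (q : ℕ) (M : Matrix ι ι R) (i j : ι) :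
    parityTwist p q M i j = (-1 : ℤ) ^ (q * (p i + p j)) • M i j := rfl

lemma parityTwist_scalar [Fintype ι] (p : ι → ℕ) (q : ℕ) (u : R) :
    parityTwist p q (Matrix.scalar ι u) = Matrix.scalar ι u := by
  ext i j
  rcases eq_or_ne i j with rfl | hij
  · simp
  · simp [hij]

lemma parityTwist_single [Fintype ι] (p : ι → ℕ) (q : ℕ) (i j : ι) (x : R) :
    parityTwist p q (Matrix.single i j x) = (-1 : ℤ) ^ (q * (p i + p j)) • Matrix.single i j x := by
  ext k l
  simp only [parityTwist_apply, Matrix.smul_apply, Matrix.single_apply]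
  split_ifs with h
  · rw [h.1, h.2]
  · simp

variable [Fintype ι] {p : ι → ℕ} {E : Matrix ι ι R}

lemma mul_inv_mul_inv_of_sub_eq {S : Type*} [Ring S] {w : S} (hw : ∀ x, Commute w x) {L M : Sˣ}
    (h : (L : S) - M = w) : w * (↑L⁻¹ * ↑M⁻¹) = (↑M⁻¹ - ↑L⁻¹ : S) := by
  rw [← mul_assoc, (hw _).eq, ← h, mul_sub, Units.inv_mul, sub_mul, one_mul, mul_assoc,
    Units.mul_inv, mul_one]

lemma IsGl.scalar_mul (hE : IsGl p E) {u : R} (hu : ∀ r, Commute u r) (x y : ι) :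
    Matrix.scalar ι (E x y) * (E + Matrix.scalar ι u) =
      parityTwist p (p x + p y) (E + Matrix.scalar ι u) * Matrix.scalar ι (E x y)
        + (-1 : ℤ) ^ p y • (Matrix.single y x 1 * (E + Matrix.scalar ι u))
        - (-1 : ℤ) ^ p x •
          parityTwist p (p x + p y) ((E + Matrix.scalar ι u) * Matrix.single y x 1) := by
  have sign : (-1 : ℤ) ^ p y = (-1) ^ (p x + (p x + p y) * (p y + p x)) :=
    neg_one_pow_congr (by grind)
  have hgl : Matrix.scalar ι (E x y) * E = parityTwist p (p x + p y) E * Matrix.scalar ι (E x y)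
        + (-1 : ℤ) ^ p y • (Matrix.single y x 1 * E)
        - (-1 : ℤ) ^ p x • parityTwist p (p x + p y) (E * Matrix.single y x 1) := by
    ext k l
    simp only [Matrix.scalar_apply, Matrix.sub_apply, Matrix.add_apply, Matrix.smul_apply,
      Matrix.diagonal_mul, Matrix.mul_diagonal, parityTwist_apply, smul_mul_assoc, hE x y k l]
    rw [single_one_mul_apply, mul_single_one_apply]
    congr 2
    · rw [smul_ite, smul_zero]
      exact ite_congr (propext eq_comm) (fun h => by rw [h]) fun _ => rfl
    · simp only [smul_ite, smul_zero, smul_smul, ← pow_add]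
      exact ite_congr (propext eq_comm) (fun h => by subst h; rw [add_comm (_ * _)]) fun _ => rfl
  have hX : Matrix.scalar ι (E x y) * Matrix.scalar ι u =
      Matrix.scalar ι u * Matrix.scalar ι (E x y) := by
    rw [← map_mul, ← map_mul, (hu _).eq]
  have hS : Matrix.single y x 1 * Matrix.scalar ι u = Matrix.scalar ι u * Matrix.single y x 1 :=
    (Matrix.scalar_commute u hu _).eq.symm
  rw [mul_add, hgl, hX, map_add, parityTwist_scalar, mul_add, add_mul, add_mul, map_add,
    map_mul _ (Matrix.scalar ι u), parityTwist_scalar, parityTwist_single, mul_smul_comm, smul_add,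
    smul_add, smul_smul, ← pow_add, ← sign, hS]
  abel

variable {u v : R} {L M : (Matrix ι ι R)ˣ}

lemma IsGl.mul_inv_apply (hE : IsGl p E) (hu : ∀ r, Commute u r)
    (hL : (L : Matrix ι ι R) = E + Matrix.scalar ι u) (x y i j : ι) :
    E x y * (↑L⁻¹ : Matrix ι ι R) i j =
      (-1 : ℤ) ^ ((p x + p y) * (p i + p j)) • ((↑L⁻¹ : Matrix ι ι R) i j * E x y)
        + (-1 : ℤ) ^ p y • ((if i = y then (↑L⁻¹ : Matrix ι ι R) x j else 0)
          - if x = j then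
              (-1 : ℤ) ^ ((p x + p y) * (p i + p y)) • (↑L⁻¹ : Matrix ι ι R) i y else 0) := by
  set P : Matrix ι ι R := ↑L⁻¹
  set X := Matrix.scalar ι (E x y)
  set S : Matrix ι ι R := Matrix.single y x 1
  set τ := parityTwist (R := R) p (p x + p y)
  have hLP : (L : Matrix ι ι R) * P = 1 := L.mul_inv
  have hPL : P * L = 1 := L.inv_mul
  have hτ : τ P * τ L = 1 := by rw [← map_mul, hPL, map_one]
  have sign : (-1 : ℤ) ^ p x * (-1) ^ ((p x + p y) * (p y + p x)) = (-1) ^ p y := by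
    rw [← pow_add]
    exact neg_one_pow_congr (by grind)
  have key : τ P * X = X * P + (-1 : ℤ) ^ p y • (τ P * S - S * P) := by
    calc τ P * X = τ P * (X * L) * P := by rw [mul_assoc, mul_assoc, hLP, mul_one]
      _ = (τ P * τ L) * X * P + (-1 : ℤ) ^ p y • (τ P * S * (L * P))
            - (-1 : ℤ) ^ p x • ((τ P * τ L) * τ S * P) := by
          rw [hL, hE.scalar_mul hu x y, ← hL, map_mul τ (L : Matrix ι ι R)]
          simp only [mul_add, add_mul, mul_sub, sub_mul, mul_smul_comm, smul_mul_assoc, mul_assoc]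
          rfl
      _ = X * P + (-1 : ℤ) ^ p y • (τ P * S - S * P) := by
          rw [hτ, hLP, one_mul, one_mul, mul_one, parityTwist_single, smul_mul_assoc, smul_smul,
            sign, smul_sub, add_sub_assoc]
  have hij := congrFun₂ key i j
  simp only [X, S, τ, Matrix.scalar_apply, Matrix.add_apply, Matrix.sub_apply, Matrix.smul_apply,
    Matrix.diagonal_mul, Matrix.mul_diagonal, parityTwist_apply, single_one_mul_apply,
    mul_single_one_apply, smul_mul_assoc] at hij
  rw [hij, add_assoc, ← smul_add, sub_add_sub_cancel, sub_self, smul_zero, add_zero]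

lemma IsGl.mul_scalar_inv (hE : IsGl p E) (hu : ∀ r, Commute u r)
    (hL : (L : Matrix ι ι R) = E + Matrix.scalar ι u) (i j : ι) :
    E * Matrix.scalar ι ((↑L⁻¹ : Matrix ι ι R) i j) =
      Matrix.scalar ι ((↑L⁻¹ : Matrix ι ι R) i j) * parityTwist p (p i + p j) E
        + (-1 : ℤ) ^ p i • ((↑L⁻¹ : Matrix ι ι R) * Matrix.single j i 1
          - Matrix.single j i 1 * parityTwist p (p i + p j) (↑L⁻¹ : Matrix ι ι R)) := by
  ext x y
  simp only [Matrix.scalar_apply, Matrix.add_apply, Matrix.sub_apply, Matrix.smul_apply,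
    Matrix.diagonal_mul, Matrix.mul_diagonal, parityTwist_apply, single_one_mul_apply,
    mul_single_one_apply, mul_smul_comm, hE.mul_inv_apply hu hL x y i j, smul_sub, smul_ite,
    smul_zero, smul_smul, ← pow_add]
  congr 2
  · rw [mul_comm]
  · split_ifs with h
    · rw [h]
    · rfl
  · refine ite_congr rfl (fun h => congrArg (· • _) (neg_one_pow_congr ?_)) fun _ => rfl
    rw [h]
    grind

lemma IsGl.scalar_inv_mul_parityTwist_sub (hE : IsGl p E) (hu : ∀ r, Commute u r)
    (hv : ∀ r, Commute v r) (hL : (L : Matrix ι ι R) = E + Matrix.scalar ι u)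
    (hM : (M : Matrix ι ι R) = E + Matrix.scalar ι v) (i j : ι) :
    Matrix.scalar ι ((↑M⁻¹ : Matrix ι ι R) i j) * parityTwist p (p i + p j) (↑L⁻¹ : Matrix ι ι R)
        - (↑L⁻¹ : Matrix ι ι R) * Matrix.scalar ι ((↑M⁻¹ : Matrix ι ι R) i j) =
      (-1 : ℤ) ^ p i • (((↑L⁻¹ : Matrix ι ι R) * (↑M⁻¹ : Matrix ι ι R)) * Matrix.single j i 1
          * parityTwist p (p i + p j) (↑L⁻¹ : Matrix ι ι R)
        - (↑L⁻¹ : Matrix ι ι R) * Matrix.single j i 1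
          * parityTwist p (p i + p j)
              ((↑M⁻¹ : Matrix ι ι R) * (↑L⁻¹ : Matrix ι ι R))) := by
  set P : Matrix ι ι R := ↑L⁻¹
  set Q : Matrix ι ι R := ↑M⁻¹
  set X := Matrix.scalar ι (Q i j) with hX
  set S : Matrix ι ι R := Matrix.single j i 1
  set τ := parityTwist (R := R) p (p i + p j) with hτ
  have hLP : (L : Matrix ι ι R) * P = 1 := L.mul_inv
  have hPL : P * L = 1 := L.inv_mul
  have hLX : L * X = X * τ L + (-1 : ℤ) ^ p i • (Q * S - S * τ Q) := by
    rw [hL, add_mul, hE.mul_scalar_inv hv hM i j, map_add, mul_add, hτ, parityTwist_scalar, hX,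
      ← map_mul, ← map_mul, (hu _).eq]
    abel
  calc X * τ P - P * X = P * (L * X) * τ P - P * X * τ (L * P) := by
        rw [hLP, map_one, mul_one, ← mul_assoc P, hPL, one_mul]
    _ = _ := by
        rw [hLX, map_mul, map_mul]
        simp only [mul_add, add_mul, mul_sub, sub_mul, mul_smul_comm, smul_mul_assoc, mul_assoc]
        abel

/-- The RTT relation between resolvents at two spectral parameters. -/
lemma IsGl.rtt (hE : IsGl p E) (hu : ∀ r, Commute u r) (hv : ∀ r, Commute v r)
    (hL : (L : Matrix ι ι R) = E + Matrix.scalar ι u)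
    (hM : (M : Matrix ι ι R) = E + Matrix.scalar ι v) (k l i j : ι) :
    (u - v) * ((↑L⁻¹ : Matrix ι ι R) k l * (↑M⁻¹ : Matrix ι ι R) i j
        - (-1 : ℤ) ^ ((p i + p j) * (p k + p l)) •
          ((↑M⁻¹ : Matrix ι ι R) i j * (↑L⁻¹ : Matrix ι ι R) k l)) =
      (-1 : ℤ) ^ (p i + (p i + p j) * (p i + p l)) •
        ((↑L⁻¹ : Matrix ι ι R) k j * (↑M⁻¹ : Matrix ι ι R) i l
          - (↑M⁻¹ : Matrix ι ι R) k j * (↑L⁻¹ : Matrix ι ι R) i l) := by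
  set P : Matrix ι ι R := ↑L⁻¹
  set Q : Matrix ι ι R := ↑M⁻¹
  set X := Matrix.scalar ι (Q i j) with hX
  set S : Matrix ι ι R := Matrix.single j i 1
  set w := Matrix.scalar ι (u - v) with hw
  set τ := parityTwist (R := R) p (p i + p j) with hτ
  have hwc : ∀ N, Commute w N := Matrix.scalar_commute _ fun r => (hu r).sub_left (hv r)
  have hLM : (L : Matrix ι ι R) - M = w := by rw [hL, hM, hw, map_sub]; abel
  have hPQ : w * (P * Q) = Q - P := mul_inv_mul_inv_of_sub_eq hwc hLM
  have hQP : w * (Q * P) = Q - P := by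
    have := mul_inv_mul_inv_of_sub_eq (fun N => (hwc N).neg_left) ((neg_sub _ _).symm.trans
      (congrArg Neg.neg hLM))
    rw [← neg_inj, ← neg_mul, this, neg_sub]
  have hwPS : w * (P * S * τ (Q * P)) = P * S * τ (Q - P) := by
    rw [← hQP, map_mul τ w, hw, hτ, parityTwist_scalar, ← hw, ← mul_assoc, (hwc _).eq,
      mul_assoc (P * S)]
  have hwcomm : w * (P * X - X * τ P) = (-1 : ℤ) ^ p i • (P * S * τ Q - Q * S * τ P) := by
    calc w * (P * X - X * τ P) = - (-1 : ℤ) ^ p i •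
          (w * (P * Q) * S * τ P - w * (P * S * τ (Q * P))) := by
          rw [← neg_sub, hE.scalar_inv_mul_parityTwist_sub hu hv hL hM]
          simp only [mul_neg, mul_smul_comm, mul_sub, mul_assoc, neg_smul, P, Q, S, τ]
      _ = _ := by
          rw [hPQ, hwPS, map_sub, neg_smul, ← smul_neg]
          congr 1
          noncomm_ring
  have hkl := congrFun₂ hwcomm k l
  simp only [hw, hX, Matrix.scalar_apply, Matrix.smul_apply,
    Matrix.diagonal_mul, Matrix.sub_apply, Matrix.mul_diagonal] at hkl
  rw [mul_single_one_mul_apply, mul_single_one_mul_apply] at hkl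
  simpa only [τ, parityTwist_apply, mul_smul_comm, ← smul_sub, smul_smul, ← pow_add] using hkl

lemma commute_inv_apply {x : R} (hx : ∀ i j, Commute x ((L : Matrix ι ι R) i j)) (i j : ι) :
    Commute x ((↑L⁻¹ : Matrix ι ι R) i j) := by
  have hL : Commute (Matrix.scalar ι x) (L : Matrix ι ι R) :=
    Matrix.scalar_commute_iff.2 (Matrix.ext fun i j => (hx i j).eq)
  exact congrFun₂ (Matrix.scalar_commute_iff.1 hL.units_inv_right) i j

lemma IsGl.commute_strace_inv (hE : IsGl p E) (hu : ∀ r, Commute u r)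
    (hL : (L : Matrix ι ι R) = E + Matrix.scalar ι u) (x y : ι) :
    Commute (strace p (↑L⁻¹ : Matrix ι ι R)) (E x y) := by
  have hterm (i : ι) : (-1 : ℤ) ^ p i • (E x y * (↑L⁻¹ : Matrix ι ι R) i i) =
      (-1 : ℤ) ^ p i • ((↑L⁻¹ : Matrix ι ι R) i i * E x y)
        + ((if i = y then (↑L⁻¹ : Matrix ι ι R) x y else 0)
          - if x = i then (↑L⁻¹ : Matrix ι ι R) x y else 0) := by
    rw [hE.mul_inv_apply hu hL, ((Even.add_self _).mul_left _).neg_one_pow, one_smul, smul_add,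
      smul_smul, ← pow_add, smul_sub, smul_ite, smul_ite, smul_zero, smul_smul, ← pow_add]
    congr 2
    · refine ite_congr rfl (fun h => ?_) fun _ => rfl
      rw [h, (Even.add_self _).neg_one_pow, one_smul]
    · refine ite_congr rfl (fun h => ?_) fun _ => rfl
      have sign : (-1 : ℤ) ^ (p i + p y + (p i + p y) * (p i + p y)) = 1 :=
        Even.neg_one_pow (by grind)
      rw [h, sign, one_smul]
  refine Eq.symm (a := E x y * _) ?_
  simp only [strace, Finset.mul_sum, Finset.sum_mul, mul_smul_comm, smul_mul_assoc, hterm,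
    Finset.sum_add_distrib, Finset.sum_sub_distrib, Finset.sum_ite_eq, Finset.sum_ite_eq',
    Finset.mem_univ, if_true, sub_self, add_zero]

lemma IsGl.rtt_add_neg_one_pow (hE : IsGl p E) (hu : ∀ r, Commute u r) (hv : ∀ r, Commute v r)
    (hL : (L : Matrix ι ι R) = E + Matrix.scalar ι u)
    (hM : (M : Matrix ι ι R) = E + Matrix.scalar ι v) {q : ℕ} (huv : u = v + ((-1 : ℤ) ^ q : ℤ))
    (k l i j : ι) :
    (-1 : ℤ) ^ q • ((↑L⁻¹ : Matrix ι ι R) k l * (↑M⁻¹ : Matrix ι ι R) i j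
        - (-1 : ℤ) ^ ((p i + p j) * (p k + p l)) •
          ((↑M⁻¹ : Matrix ι ι R) i j * (↑L⁻¹ : Matrix ι ι R) k l)) =
      (-1 : ℤ) ^ (p i + (p i + p j) * (p i + p l)) •
        ((↑L⁻¹ : Matrix ι ι R) k j * (↑M⁻¹ : Matrix ι ι R) i l
          - (↑M⁻¹ : Matrix ι ι R) k j * (↑L⁻¹ : Matrix ι ι R) i l) := by
  rw [← hE.rtt hu hv hL hM k l i j, huv, add_sub_cancel_left, ← zsmul_eq_mul]

lemma IsGl.inv_apply_mul_inv_apply_comm (hE : IsGl p E) (hu : ∀ r, Commute u r)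
    (hv : ∀ r, Commute v r) (hL : (L : Matrix ι ι R) = E + Matrix.scalar ι u)
    (hM : (M : Matrix ι ι R) = E + Matrix.scalar ι v) {a : ι}
    (huv : u = v + ((-1 : ℤ) ^ p a : ℤ)) (i : ι) :
    (↑M⁻¹ : Matrix ι ι R) a a * (↑L⁻¹ : Matrix ι ι R) i a =
      (↑M⁻¹ : Matrix ι ι R) i a * (↑L⁻¹ : Matrix ι ι R) a a := by
  have h := hE.rtt_add_neg_one_pow hu hv hL hM huv i a a a
  rw [((Even.add_self (p a)).mul_right _).neg_one_pow, one_smul, pow_add,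
    ((Even.add_self (p a)).mul_right _).neg_one_pow, mul_one] at h
  have h' := congrArg ((-1 : ℤ) ^ p a • ·) h
  simp only [neg_one_pow_smul_smul] at h'
  exact sub_right_injective h'

lemma IsGl.sum_inv_apply_mul_inv_apply (hE : IsGl p E) (hu : ∀ r, Commute u r)
    (hv : ∀ r, Commute v r) (hL : (L : Matrix ι ι R) = E + Matrix.scalar ι u)
    (hM : (M : Matrix ι ι R) = E + Matrix.scalar ι v) {a : ι}
    (huv : u = v + ((-1 : ℤ) ^ p a : ℤ)) :
    ∑ i, (-1 : ℤ) ^ p i • ((↑M⁻¹ : Matrix ι ι R) i a * (↑L⁻¹ : Matrix ι ι R) a i) =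
      (↑M⁻¹ : Matrix ι ι R) a a * (1 + strace p (↑L⁻¹ : Matrix ι ι R))
        - (↑L⁻¹ : Matrix ι ι R) a a * (1 + strace p (↑M⁻¹ : Matrix ι ι R)) := by
  set P : Matrix ι ι R := ↑L⁻¹
  set Q : Matrix ι ι R := ↑M⁻¹
  have hPQ : ∑ i, (-1 : ℤ) ^ p a • (P a i * Q i a) = Q a a - P a a := by
    have hw (r : R) : Commute (u - v) r := (hu r).sub_left (hv r)
    have h := mul_inv_mul_inv_of_sub_eq (Matrix.scalar_commute _ hw) (L := L) (M := M)
      (by rw [hL, hM, map_sub, add_sub_add_left_eq_sub])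
    rw [huv, add_sub_cancel_left] at h
    have haa := congrFun₂ h a a
    rwa [Matrix.scalar_apply, Matrix.diagonal_mul, Matrix.mul_apply, Matrix.sub_apply,
      ← zsmul_eq_mul, Finset.smul_sum] at haa
  have hterm (i : ι) : (-1 : ℤ) ^ p i • (Q i a * P a i) = (-1 : ℤ) ^ p a • (P a i * Q i a)
      + (Q a a * (-1 : ℤ) ^ p i • P i i - P a a * (-1 : ℤ) ^ p i • Q i i) := by
    have h := hE.rtt_add_neg_one_pow hu hv hL hM huv a i i a
    rw [smul_sub, smul_smul, ← pow_add] at h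
    have s₁ : (-1 : ℤ) ^ (p a + (p i + p a) * (p a + p i)) = (-1) ^ p i :=
      neg_one_pow_congr (by grind)
    have s₂ : (-1 : ℤ) ^ (p i + (p i + p a) * (p i + p i)) = (-1) ^ p i :=
      neg_one_pow_congr (by grind)
    rw [s₁, s₂, sub_eq_iff_eq_add] at h
    rw [h, mul_smul_comm, mul_smul_comm, ← smul_sub, ← neg_sub (P a a * _), smul_neg]
    abel
  simp only [hterm, Finset.sum_add_distrib, Finset.sum_sub_distrib, ← Finset.mul_sum, hPQ, strace]
  noncomm_ring

/-- The sum on the left is `str` of the resolvent of the block omitting `a`, by the Schur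
complement formula. -/
lemma IsGl.inv_apply_mul_one_add_strace (hE : IsGl p E) (hu : ∀ r, Commute u r)
    (hv : ∀ r, Commute v r) (hL : (L : Matrix ι ι R) = E + Matrix.scalar ι u)
    (hM : (M : Matrix ι ι R) = E + Matrix.scalar ι v) {a : ι}
    (huv : u = v + ((-1 : ℤ) ^ p a : ℤ)) {d : R} (hd : (↑L⁻¹ : Matrix ι ι R) a a * d = 1) :
    (↑M⁻¹ : Matrix ι ι R) a a * (1 + ∑ i, (-1 : ℤ) ^ p i • ((↑L⁻¹ : Matrix ι ι R) i i
        - (↑L⁻¹ : Matrix ι ι R) i a * d * (↑L⁻¹ : Matrix ι ι R) a i)) =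
      (1 + strace p (↑M⁻¹ : Matrix ι ι R)) * (↑L⁻¹ : Matrix ι ι R) a a := by
  have hcol := hE.inv_apply_mul_inv_apply_comm hu hv hL hM huv
  have hsum := hE.sum_inv_apply_mul_inv_apply hu hv hL hM huv
  set P : Matrix ι ι R := ↑L⁻¹
  set Q : Matrix ι ι R := ↑M⁻¹
  have hcomm : Commute (strace p Q) (P a a) := by
    refine commute_inv_apply (fun i j => ?_) a a
    rw [hL, Matrix.add_apply, Matrix.scalar_apply, Matrix.diagonal_apply]
    refine (hE.commute_strace_inv hv hM i j).add_right ?_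
    split_ifs
    exacts [(hu _).symm, Commute.zero_right _]
  have hcorr : Q a a * ∑ i, (-1 : ℤ) ^ p i • (P i a * d * P a i) =
      Q a a * (1 + strace p P) - P a a * (1 + strace p Q) := by
    rw [← hsum, Finset.mul_sum]
    refine Finset.sum_congr rfl fun i _ => ?_
    rw [mul_smul_comm, mul_assoc, ← mul_assoc, hcol, mul_assoc, ← mul_assoc (P a a), hd, one_mul]
  rw [add_mul 1, hcomm.eq, one_mul, ← mul_one_add]
  simp only [smul_sub, Finset.sum_sub_distrib]
  rw [← add_sub_assoc, mul_sub, hcorr]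
  exact sub_sub_cancel _ _

end GlRelations

section SchurComplement

variable {R ι κ : Type*} [Ring R] [Fintype ι] [Fintype κ] [DecidableEq ι] [DecidableEq κ]

/-- The Schur complement of the upper left block `M` of an invertible block matrix `L`. -/
def schurCompl (L : (Matrix (ι ⊕ κ) (ι ⊕ κ) R)ˣ) (M : (Matrix ι ι R)ˣ) : Matrix κ κ R :=
  L.val.toBlocks₂₂ - L.val.toBlocks₂₁ * M⁻¹.val * L.val.toBlocks₁₂

lemma schurCompl_submatrix {κ' : Type*} [Fintype κ'] [DecidableEq κ']
    {L : (Matrix (ι ⊕ κ) (ι ⊕ κ) R)ˣ} {L' : (Matrix (ι ⊕ κ') (ι ⊕ κ') R)ˣ} {g : κ' → κ}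
    (hL : L'.val = L.val.submatrix (Sum.map id g) (Sum.map id g)) (M : (Matrix ι ι R)ˣ) :
    schurCompl L' M = (schurCompl L M).submatrix g g := by
  rw [schurCompl, hL]
  rfl

lemma blocks_of_mul_eq_one {L P : Matrix (ι ⊕ κ) (ι ⊕ κ) R} (h : L * P = 1) :
    L.toBlocks₁₁ * P.toBlocks₁₁ + L.toBlocks₁₂ * P.toBlocks₂₁ = 1 ∧
    L.toBlocks₁₁ * P.toBlocks₁₂ + L.toBlocks₁₂ * P.toBlocks₂₂ = 0 ∧
    L.toBlocks₂₁ * P.toBlocks₁₁ + L.toBlocks₂₂ * P.toBlocks₂₁ = 0 ∧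
    L.toBlocks₂₁ * P.toBlocks₁₂ + L.toBlocks₂₂ * P.toBlocks₂₂ = 1 := by
  rw [← Matrix.fromBlocks_toBlocks L, ← Matrix.fromBlocks_toBlocks P, Matrix.fromBlocks_multiply,
    ← Matrix.fromBlocks_one] at h
  exact Matrix.fromBlocks_inj.1 h

variable {L : (Matrix (ι ⊕ κ) (ι ⊕ κ) R)ˣ} {M : (Matrix ι ι R)ˣ}

lemma toBlocks₁₂_inv_eq (hM : M.val = L.val.toBlocks₁₁) :
    L⁻¹.val.toBlocks₁₂ = -(M⁻¹.val * (L.val.toBlocks₁₂ * L⁻¹.val.toBlocks₂₂)) := by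
  obtain ⟨-, h₁₂, -, -⟩ := blocks_of_mul_eq_one L.mul_inv
  rw [← neg_eq_of_add_eq_zero_right h₁₂, ← hM, Matrix.mul_neg, ← Matrix.mul_assoc, Units.inv_mul,
    Matrix.one_mul, neg_neg]

lemma toBlocks₂₁_inv_eq (hM : M.val = L.val.toBlocks₁₁) :
    L⁻¹.val.toBlocks₂₁ = -(L⁻¹.val.toBlocks₂₂ * L.val.toBlocks₂₁ * M⁻¹.val) := by
  obtain ⟨-, -, h₂₁, -⟩ := blocks_of_mul_eq_one L.inv_mul
  rw [← neg_eq_of_add_eq_zero_right h₂₁, ← hM, Matrix.neg_mul, Matrix.mul_assoc, Units.mul_inv,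
    Matrix.mul_one, neg_neg]

lemma schurCompl_mul_toBlocks₂₂_inv (hM : M.val = L.val.toBlocks₁₁) :
    schurCompl L M * L⁻¹.val.toBlocks₂₂ = 1 := by
  obtain ⟨-, -, -, h₂₂⟩ := blocks_of_mul_eq_one L.mul_inv
  rw [schurCompl, ← h₂₂, toBlocks₁₂_inv_eq hM]
  simp only [Matrix.sub_mul, Matrix.mul_neg, Matrix.mul_assoc]
  abel

lemma toBlocks₂₂_inv_mul_schurCompl (hM : M.val = L.val.toBlocks₁₁) :
    L⁻¹.val.toBlocks₂₂ * schurCompl L M = 1 := by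
  obtain ⟨-, -, -, h₂₂⟩ := blocks_of_mul_eq_one L.inv_mul
  rw [schurCompl, ← h₂₂, toBlocks₂₁_inv_eq hM]
  simp only [Matrix.mul_sub, Matrix.neg_mul, Matrix.mul_assoc]
  abel

lemma inv_eq_toBlocks₁₁_inv_sub (hM : M.val = L.val.toBlocks₁₁) :
    M⁻¹.val =
      L⁻¹.val.toBlocks₁₁ - L⁻¹.val.toBlocks₁₂ * schurCompl L M * L⁻¹.val.toBlocks₂₁ := by
  obtain ⟨h₁₁, -, -, -⟩ := blocks_of_mul_eq_one L.inv_mul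
  have hSP : schurCompl L M * L⁻¹.val.toBlocks₂₁ = -(L.val.toBlocks₂₁ * M⁻¹.val) := by
    rw [toBlocks₂₁_inv_eq hM, Matrix.mul_neg, Matrix.mul_assoc L⁻¹.val.toBlocks₂₂,
      ← Matrix.mul_assoc, schurCompl_mul_toBlocks₂₂_inv hM, Matrix.one_mul]
  calc M⁻¹.val = 1 * M⁻¹.val := (one_mul _).symm
    _ = L⁻¹.val.toBlocks₁₁ + L⁻¹.val.toBlocks₁₂ * L.val.toBlocks₂₁ * M⁻¹.val := by
      rw [← h₁₁, ← hM, add_mul, Units.mul_inv_cancel_right]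
    _ = _ := by
      rw [Matrix.mul_assoc _ (schurCompl L M), hSP, Matrix.mul_neg, sub_neg_eq_add,
        Matrix.mul_assoc]

end SchurComplement

section ColumnDeterminant

variable {R ι κ : Type*} [Ring R] {k : ℕ}

/-- The column determinant `∑ sgn(σ) X_{σ(1),1} ⋯ X_{σ(k),k}`, where the `t`-th column (counted
from `0`) of `X` is the `t`-th column of `Y t`. -/
def colDet (Y : ℕ → Matrix (Fin k) (Fin k) R) : R :=
  ∑ σ : Equiv.Perm (Fin k),
    (Equiv.Perm.sign σ : ℤ) • (List.ofFn fun t : Fin k => Y t (σ t) t).prod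

/-- The Manin relations for the matrix `Y t · exp(-∂/∂t)`, where `exp(-∂/∂t)` shifts `t` by `1`:
entries of a column commute, and cross commutators in a 2 × 2 minor agree. -/
structure IsManin (Y : ℕ → Matrix ι κ R) : Prop where
  column : ∀ t a b j, Y t a j * Y (t + 1) b j = Y t b j * Y (t + 1) a j
  cross : ∀ t a b j l, Y t a j * Y (t + 1) b l - Y t b j * Y (t + 1) a l =
    Y t b l * Y (t + 1) a j - Y t a l * Y (t + 1) b j

lemma isManin_of_sub_eq {Y : ℕ → Matrix ι κ R}
    (hY : ∀ t a b j l, Y t a j * Y (t + 1) b l - Y t b j * Y (t + 1) a l =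
      Y (t + 1) b l * Y t a j - Y (t + 1) b j * Y t a l) : IsManin Y where
  column t a b j := sub_eq_zero.1 ((hY t a b j j).trans (sub_self _))
  cross t a b j l := by
    rw [hY, ← neg_sub (Y t a l * _), hY, neg_sub]

lemma commute_colDet {Y : ℕ → Matrix (Fin k) (Fin k) R} {x : R}
    (hx : ∀ t < k, ∀ i j, Commute x (Y t i j)) : Commute x (colDet Y) := by
  refine Commute.sum_right _ _ _ fun σ _ =>
    Commute.smul_right (Commute.list_prod_right _ _ fun r hr => ?_) _
  obtain ⟨t, rfl⟩ := List.mem_ofFn.1 hr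
  exact hx t t.isLt _ _

lemma sum_sign_smul_eq_zero {M : Type*} [AddCommGroup M] [Fintype ι] [DecidableEq ι] {i j : ι}
    (hij : i ≠ j) {φ : Equiv.Perm ι → M} (hφ : ∀ σ, φ (σ * Equiv.swap i j) = φ σ) :
    ∑ σ, (Equiv.Perm.sign σ : ℤ) • φ σ = 0 := by
  refine Finset.sum_involution (fun σ _ => σ * Equiv.swap i j) (fun σ _ => ?_) (fun σ _ _ h => ?_)
    (fun _ _ => Finset.mem_univ _) fun σ _ => Equiv.mul_swap_mul_self i j σ
  · rw [hφ, Equiv.Perm.sign_mul, Equiv.Perm.sign_swap hij, mul_neg_one, Units.val_neg, neg_smul,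
      add_neg_cancel]
  · exact hij (Equiv.swap_eq_one_iff.1 (mul_eq_left.1 h))

lemma exists_prod_ofFn_eq (t : Fin k) (r : Fin (k + 1) → R) :
    ∃ A B : R, ∀ g : Fin (k + 1) → R, (∀ i, i ≠ t.castSucc → i ≠ t.succ → g i = r i) →
      (List.ofFn g).prod = A * (g t.castSucc * g t.succ) * B := by
  induction k with
  | zero => exact t.elim0
  | succ k ih =>
    cases t using Fin.cases with
    | zero =>
      refine ⟨1, (List.ofFn fun i : Fin k => r i.succ.succ).prod, fun g hg => ?_⟩
      have hrest : (fun i : Fin k => g i.succ.succ) = fun i => r i.succ.succ :=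
        funext fun i => hg _ (Fin.succ_ne_zero _) ((Fin.succ_injective _).ne (Fin.succ_ne_zero _))
      rw [List.ofFn_succ, List.ofFn_succ, List.prod_cons, List.prod_cons, hrest, one_mul, mul_assoc]
      rfl
    | succ t =>
      obtain ⟨A, B, hAB⟩ := ih t fun i => r i.succ
      refine ⟨r 0 * A, B, fun g hg => ?_⟩
      rw [List.ofFn_succ, List.prod_cons, hAB (fun i => g i.succ) fun i h₁ h₂ =>
        hg _ ((Fin.succ_injective _).ne h₁) ((Fin.succ_injective _).ne h₂),
        hg 0 (Fin.succ_ne_zero t.castSucc).symm (Fin.succ_ne_zero _).symm]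
      simp only [mul_assoc, Fin.castSucc_succ]

section Manin

variable {Y : ℕ → Matrix (Fin (k + 1)) ι R}

lemma IsManin.colDet_swap (hY : IsManin Y) (c : Fin (k + 1) → ι) (t : Fin k) :
    colDet (fun s => (Y s).submatrix id (c ∘ Equiv.swap t.castSucc t.succ)) =
      -colDet fun s => (Y s).submatrix id c := by
  rw [eq_neg_iff_add_eq_zero, colDet, colDet, ← Finset.sum_add_distrib]
  simp only [← smul_add]
  refine sum_sign_smul_eq_zero t.castSucc_lt_succ.ne fun σ => ?_
  obtain ⟨A, B, hAB⟩ := exists_prod_ofFn_eq t fun i => Y i (σ i) (c i)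
  have hs (i : Fin (k + 1)) (h₁ : i ≠ t.castSucc) (h₂ : i ≠ t.succ) :
      Equiv.swap t.castSucc t.succ i = i := Equiv.swap_apply_of_ne_of_ne h₁ h₂
  simp only [Matrix.submatrix_apply, id_eq, Function.comp_apply]
  rw [hAB _ fun i h₁ h₂ => by rw [Equiv.Perm.mul_apply, hs i h₁ h₂],
    hAB _ fun i h₁ h₂ => by rw [Equiv.Perm.mul_apply, hs i h₁ h₂],
    hAB _ fun i h₁ h₂ => by rw [hs i h₁ h₂], hAB _ fun _ _ _ => rfl]
  simp only [Equiv.Perm.mul_apply, Equiv.swap_apply_left, Equiv.swap_apply_right,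
    Fin.val_castSucc, Fin.val_succ, ← add_mul, ← mul_add]
  have hcross := hY.cross t (σ t.castSucc) (σ t.succ) (c t.castSucc) (c t.succ)
  rw [sub_eq_sub_iff_add_eq_add, add_comm, eq_comm] at hcross
  rw [hcross, add_comm]

lemma IsManin.colDet_eq_zero_of_castSucc_eq_succ (hY : IsManin Y) {c : Fin (k + 1) → ι} {t : Fin k}
    (hc : c t.castSucc = c t.succ) : colDet (fun s => (Y s).submatrix id c) = 0 := by
  refine sum_sign_smul_eq_zero t.castSucc_lt_succ.ne fun σ => ?_
  obtain ⟨A, B, hAB⟩ := exists_prod_ofFn_eq t fun i => Y i (σ i) (c i)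
  simp only [Matrix.submatrix_apply, id_eq]
  rw [hAB _ fun i h₁ h₂ => by rw [Equiv.Perm.mul_apply, Equiv.swap_apply_of_ne_of_ne h₁ h₂],
    hAB _ fun _ _ _ => rfl]
  simp only [Equiv.Perm.mul_apply, Equiv.swap_apply_left, Equiv.swap_apply_right,
    Fin.val_castSucc, Fin.val_succ, hc, hY.column t (σ t.succ)]

lemma IsManin.colDet_eq_zero (hY : IsManin Y) {c : Fin (k + 1) → ι} {i j : Fin (k + 1)}
    (hij : i < j) (hc : c i = c j) : colDet (fun s => (Y s).submatrix id c) = 0 := by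
  induction j using Fin.induction generalizing c with
  | zero => exact absurd hij (Fin.not_lt_zero i)
  | succ t ih =>
    rcases (Fin.le_castSucc_iff.2 hij).eq_or_lt with rfl | hit
    · exact hY.colDet_eq_zero_of_castSucc_eq_succ hc
    · rw [← neg_eq_zero, ← hY.colDet_swap c t]
      refine ih hit ?_
      rw [Function.comp_apply, Function.comp_apply, Equiv.swap_apply_left,
        Equiv.swap_apply_of_ne_of_ne hit.ne hij.ne, hc]

end Manin

lemma sum_perm_fixing {M : Type*} [AddCommMonoid M] [Fintype ι] [DecidableEq ι] [Fintype κ]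
    [DecidableEq κ] (e : Option ι ≃ κ) (φ : Equiv.Perm κ → M) :
    ∑ σ with σ (e none) = e none, φ σ =
      ∑ τ : Equiv.Perm ι, φ (e.permCongr (Equiv.optionCongr τ)) := by
  rw [Finset.sum_filter, ← e.permCongr.sum_comp, ← Equiv.Perm.decomposeOption.symm.sum_comp,
    Fintype.sum_prod_type, Fintype.sum_eq_single none]
  · simp [Equiv.Perm.mul_def]
  · intro i hi
    simp [hi]

section Cofactors

variable (Y : ℕ → Matrix (Fin (k + 1)) (Fin (k + 1)) R)

/-- The cofactor of the entry `(i, k)` in the last column of the column determinant. -/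
def lastCofactor (i : Fin (k + 1)) : R :=
  ∑ σ : Equiv.Perm (Fin (k + 1)) with σ (Fin.last k) = i, (Equiv.Perm.sign σ : ℤ) •
    (List.ofFn fun t : Fin k => Y t (σ t.castSucc) t.castSucc).prod

/-- The cofactor of the entry `(i, 0)` in the first column of the column determinant. -/
def firstCofactor (i : Fin (k + 1)) : R :=
  ∑ σ : Equiv.Perm (Fin (k + 1)) with σ 0 = i, (Equiv.Perm.sign σ : ℤ) •
    (List.ofFn fun t : Fin k => Y (t + 1) (σ t.succ) t.succ).prod

lemma sum_lastCofactor_mul_eq_colDet (j : Fin (k + 1)) :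
    ∑ i, lastCofactor Y i * Y k i j =
      colDet fun t => (Y t).submatrix id (Fin.snoc (α := fun _ => Fin (k + 1)) Fin.castSucc j) := by
  rw [colDet, ← Finset.sum_fiberwise _ fun σ : Equiv.Perm (Fin (k + 1)) => σ (Fin.last k)]
  refine Finset.sum_congr rfl fun i _ => ?_
  rw [lastCofactor, Finset.sum_mul]
  refine Finset.sum_congr rfl fun σ hσ => ?_
  rw [List.ofFn_succ', List.concat_eq_append, List.prod_append, List.prod_singleton, smul_mul_assoc]
  simp [(Finset.mem_filter.1 hσ).2]

lemma sum_mul_firstCofactor_eq_colDet (j : Fin (k + 1)) :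
    ∑ i, Y 0 i j * firstCofactor Y i =
      colDet fun t => (Y t).submatrix id (Fin.cons (α := fun _ => Fin (k + 1)) j Fin.succ) := by
  rw [colDet, ← Finset.sum_fiberwise _ fun σ : Equiv.Perm (Fin (k + 1)) => σ 0]
  refine Finset.sum_congr rfl fun i _ => ?_
  rw [firstCofactor, Finset.mul_sum]
  refine Finset.sum_congr rfl fun σ hσ => ?_
  rw [List.ofFn_succ, List.prod_cons, mul_smul_comm]
  simp [(Finset.mem_filter.1 hσ).2]

lemma lastCofactor_last :
    lastCofactor Y (Fin.last k) = colDet fun t => (Y t).submatrix Fin.castSucc Fin.castSucc := by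
  rw [lastCofactor, colDet]
  refine (sum_perm_fixing finSuccEquivLast.symm _).trans (Finset.sum_congr rfl fun τ _ => ?_)
  simp [Equiv.permCongr_apply]

lemma firstCofactor_zero :
    firstCofactor Y 0 = colDet fun t => (Y (t + 1)).submatrix Fin.succ Fin.succ := by
  rw [firstCofactor, colDet]
  refine (sum_perm_fixing (finSuccEquiv k).symm _).trans (Finset.sum_congr rfl fun τ _ => ?_)
  simp [Equiv.permCongr_apply]

variable {Y}

lemma IsManin.sum_lastCofactor_mul (hY : IsManin Y) (j : Fin (k + 1)) :
    ∑ i, lastCofactor Y i * Y k i j = if j = Fin.last k then colDet Y else 0 := by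
  rw [sum_lastCofactor_mul_eq_colDet]
  split_ifs with hj
  · have hid : Fin.snoc (α := fun _ => Fin (k + 1)) Fin.castSucc (Fin.last k) = id :=
      Fin.snoc_init_self (α := fun _ => Fin (k + 1)) id
    simp only [hj, hid, Matrix.submatrix_id_id]
  · obtain ⟨i, rfl⟩ := Fin.exists_castSucc_eq.2 hj
    exact hY.colDet_eq_zero i.castSucc_lt_last (by rw [Fin.snoc_castSucc, Fin.snoc_last])

lemma IsManin.sum_mul_firstCofactor (hY : IsManin Y) (j : Fin (k + 1)) :
    ∑ i, Y 0 i j * firstCofactor Y i = if j = 0 then colDet Y else 0 := by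
  rw [sum_mul_firstCofactor_eq_colDet]
  split_ifs with hj
  · have hid : Fin.cons (α := fun _ => Fin (k + 1)) 0 Fin.succ = id :=
      Fin.cons_self_tail (α := fun _ => Fin (k + 1)) id
    simp only [hj, hid, Matrix.submatrix_id_id]
  · obtain ⟨i, rfl⟩ := Fin.exists_succ_eq.2 hj
    exact hY.colDet_eq_zero i.succ_pos (by rw [Fin.cons_succ, Fin.cons_zero])

lemma IsManin.colDet_castSucc (hY : IsManin Y) {Q : Matrix (Fin (k + 1)) (Fin (k + 1)) R}
    (hQ : Y k * Q = 1) :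
    colDet (fun t => (Y t).submatrix Fin.castSucc Fin.castSucc) =
      colDet Y * Q (Fin.last k) (Fin.last k) := by
  have hw : Matrix.vecMul (lastCofactor Y) (Y k) = Pi.single (Fin.last k) (colDet Y) :=
    funext fun j => (hY.sum_lastCofactor_mul j).trans (Pi.single_apply _ _ _).symm
  rw [← lastCofactor_last, ← Matrix.vecMul_one (lastCofactor Y), ← hQ, ← Matrix.vecMul_vecMul, hw,
    Matrix.single_vecMul]
  rfl

lemma IsManin.colDet_succ (hY : IsManin Y) {S : Matrix (Fin (k + 1)) (Fin (k + 1)) R}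
    (hS : S * (Y 0).transpose = 1) :
    colDet (fun t => (Y (t + 1)).submatrix Fin.succ Fin.succ) = S 0 0 * colDet Y := by
  have hw : Matrix.mulVec (Y 0).transpose (firstCofactor Y) = Pi.single 0 (colDet Y) :=
    funext fun j => (hY.sum_mul_firstCofactor j).trans (Pi.single_apply _ _ _).symm
  rw [← firstCofactor_zero, ← Matrix.one_mulVec (firstCofactor Y), ← hS, ← Matrix.mulVec_mulVec, hw,
    Matrix.mulVec_single]
  rfl

end Cofactors

end ColumnDeterminant

section LaurentResolvent

variable {A : Type} {ι κ : Type*} [Ring A]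

lemma Tv_commute (x : TSer A) : Commute Tv x := by
  ext k
  rw [Tv, HahnSeries.coeff_single_mul, HahnSeries.coeff_mul_single, one_mul, mul_one]

lemma intCast_sub_Tv_commute (c : ℤ) (x : TSer A) : Commute ((c : TSer A) - Tv) x :=
  (Int.cast_commute c x).sub_left (Tv_commute x)

lemma Tv_mul_single_one : (Tv : TSer A) * HahnSeries.single 1 1 = 1 := by
  rw [Tv, HahnSeries.single_mul_single, one_mul, neg_add_cancel, HahnSeries.single_zero_one]

variable [Fintype ι] [DecidableEq ι] [Fintype κ] [DecidableEq κ]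

/-- The geometric series `∑ M ^ k X ^ k` as a matrix of formal power series. -/
def geomPowerSeries (M : Matrix ι ι A) : Matrix ι ι (PowerSeries A) :=
  Matrix.of fun i j => PowerSeries.mk fun k => (M ^ k) i j

lemma coeff_geomPowerSeries_sub_one (M : Matrix ι ι A) (i j : ι) (k : ℕ) :
    PowerSeries.coeff k ((geomPowerSeries M - 1) i j) = if k = 0 then 0 else (M ^ k) i j := by
  rw [← Matrix.map_one PowerSeries.C (map_zero _) (map_one _), Matrix.sub_apply, Matrix.map_apply,
    map_sub, PowerSeries.coeff_C, geomPowerSeries, Matrix.of_apply, PowerSeries.coeff_mk]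
  split_ifs with hk
  · rw [hk, pow_zero, sub_self]
  · rw [sub_zero]

lemma map_C_mul_geomPowerSeries (M : Matrix ι ι A) :
    M.map PowerSeries.C * geomPowerSeries M * Matrix.scalar ι PowerSeries.X =
      geomPowerSeries M - 1 := by
  ext i j k
  rw [coeff_geomPowerSeries_sub_one, Matrix.scalar_apply, Matrix.mul_diagonal, Matrix.mul_apply]
  cases k with
  | zero => simp
  | succ k => simp [geomPowerSeries, PowerSeries.coeff_succ_mul_X, pow_succ', Matrix.mul_apply]

lemma geomPowerSeries_mul_map_C (M : Matrix ι ι A) :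
    geomPowerSeries M * M.map PowerSeries.C * Matrix.scalar ι PowerSeries.X =
      geomPowerSeries M - 1 := by
  ext i j k
  rw [coeff_geomPowerSeries_sub_one, Matrix.scalar_apply, Matrix.mul_diagonal, Matrix.mul_apply]
  cases k with
  | zero => simp
  | succ k => simp [geomPowerSeries, PowerSeries.coeff_succ_mul_X, pow_succ, Matrix.mul_apply]

/-- The geometric series `∑ M ^ k T ^ (-1 - k)`, which inverts `T - M`. -/
def geomLaurent (M : Matrix ι ι A) : Matrix ι ι (TSer A) :=
  (HahnSeries.ofPowerSeries ℤ A).mapMatrix (geomPowerSeries M) *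
    Matrix.scalar ι (HahnSeries.single 1 1)

lemma mapMatrix_C_eq (M : Matrix ι ι A) :
    M.map HahnSeries.C = (HahnSeries.ofPowerSeries ℤ A).mapMatrix (M.map PowerSeries.C) := by
  ext1 i j
  exact (HahnSeries.ofPowerSeries_C _).symm

lemma scalar_single_one_eq :
    Matrix.scalar ι (HahnSeries.single 1 1) =
      (HahnSeries.ofPowerSeries ℤ A).mapMatrix (Matrix.scalar ι PowerSeries.X) := by
  ext1 i j
  simp only [Matrix.scalar_apply, RingHom.mapMatrix_apply, Matrix.map_apply, Matrix.diagonal_apply,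
    apply_ite (HahnSeries.ofPowerSeries ℤ A), HahnSeries.ofPowerSeries_X, map_zero]

lemma scalar_Tv_mul_geomLaurent (M : Matrix ι ι A) :
    Matrix.scalar ι Tv * geomLaurent M =
      (HahnSeries.ofPowerSeries ℤ A).mapMatrix (geomPowerSeries M) := by
  rw [geomLaurent, ← mul_assoc, (Matrix.scalar_commute _ Tv_commute _).eq, mul_assoc, ← map_mul,
    Tv_mul_single_one, map_one, mul_one]

lemma sub_scalar_Tv_mul_geomLaurent (M : Matrix ι ι A) :
    (M.map HahnSeries.C - Matrix.scalar ι Tv) * geomLaurent M = -1 := by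
  rw [sub_mul, scalar_Tv_mul_geomLaurent, geomLaurent, mapMatrix_C_eq, scalar_single_one_eq,
    ← mul_assoc, ← map_mul, ← map_mul, map_C_mul_geomPowerSeries, map_sub, map_one,
    sub_sub_cancel_left]

lemma geomLaurent_mul_sub_scalar_Tv (M : Matrix ι ι A) :
    geomLaurent M * (M.map HahnSeries.C - Matrix.scalar ι Tv) = -1 := by
  have hX : Commute (Matrix.scalar ι PowerSeries.X) (M.map PowerSeries.C) :=
    Matrix.scalar_commute _ (fun φ => (PowerSeries.commute_X φ).symm) _
  rw [mul_sub, (Matrix.scalar_commute _ Tv_commute _).symm.eq, scalar_Tv_mul_geomLaurent,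
    geomLaurent, mapMatrix_C_eq, scalar_single_one_eq, mul_assoc, ← map_mul, ← map_mul, hX.eq,
    ← mul_assoc, geomPowerSeries_mul_map_C, map_sub, map_one, sub_sub_cancel_left]

lemma map_C_add_scalar (M : Matrix ι ι A) (c : ℤ) :
    (M + Matrix.scalar ι (c : A)).map HahnSeries.C - Matrix.scalar ι Tv =
      M.map HahnSeries.C + Matrix.scalar ι ((c : TSer A) - Tv) := by
  have hc : (Matrix.scalar ι (c : A)).map HahnSeries.C = Matrix.scalar ι (c : TSer A) := by
    rw [map_intCast, map_intCast]
    exact map_intCast (HahnSeries.C.mapMatrix) c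
  rw [Matrix.map_add _ (map_add _), hc, map_sub, add_sub_assoc]

/-- The invertible matrix `M + c - T`. -/
def shiftUnit (M : Matrix ι ι A) (c : ℤ) : (Matrix ι ι (TSer A))ˣ where
  val := M.map HahnSeries.C + Matrix.scalar ι ((c : TSer A) - Tv)
  inv := -geomLaurent (M + Matrix.scalar ι (c : A))
  val_inv := by rw [← map_C_add_scalar, mul_neg, sub_scalar_Tv_mul_geomLaurent, neg_neg]
  inv_val := by rw [← map_C_add_scalar, neg_mul, geomLaurent_mul_sub_scalar_Tv, neg_neg]

lemma shiftUnit_val (M : Matrix ι ι A) (c : ℤ) :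
    (shiftUnit M c).val = M.map HahnSeries.C + Matrix.scalar ι ((c : TSer A) - Tv) := rfl

/-- The resolvent `(M + c - T)⁻¹`. -/
def shiftInv (M : Matrix ι ι A) (c : ℤ) : Matrix ι ι (TSer A) := (shiftUnit M c)⁻¹.val

/-- The series `1 + str (M + c - T)⁻¹`; at `c = 0` it is `1 - ∑ str (M ^ k) T ^ (-1 - k)`. -/
def newtonSeries (p : ι → ℕ) (M : Matrix ι ι A) (c : ℤ) : TSer A := 1 + strace p (shiftInv M c)

lemma shiftUnit_apply (M : Matrix ι ι A) (c : ℤ) (i j : ι) :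
    (shiftUnit M c).val i j = HahnSeries.C (M i j) + if i = j then (c : TSer A) - Tv else 0 :=
  rfl

lemma shiftUnit_submatrix (M : Matrix ι ι A) {f : κ → ι} (hf : Function.Injective f) (c : ℤ) :
    (shiftUnit (M.submatrix f f) c).val = (shiftUnit M c).val.submatrix f f := by
  ext1 i j
  simp only [shiftUnit_apply, Matrix.submatrix_apply, hf.eq_iff]

lemma shiftInv_submatrix_equiv (M : Matrix ι ι A) (e : κ ≃ ι) (c : ℤ) :
    shiftInv (M.submatrix e e) c = (shiftInv M c).submatrix e e := by
  refine Units.inv_eq_of_mul_eq_one_right ?_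
  rw [shiftUnit_submatrix M e.injective, shiftInv, Matrix.submatrix_mul_equiv, Units.mul_inv,
    Matrix.submatrix_one_equiv]

lemma newtonSeries_submatrix_equiv (p : ι → ℕ) (M : Matrix ι ι A) (e : κ ≃ ι) (c : ℤ) :
    newtonSeries (p ∘ e) (M.submatrix e e) c = newtonSeries p M c := by
  rw [newtonSeries, shiftInv_submatrix_equiv, strace_submatrix_equiv, newtonSeries]

section Commute

variable {M : Matrix ι ι A} {x : TSer A}

lemma commute_shiftUnit (hx : ∀ i j, Commute x (HahnSeries.C (M i j))) (c : ℤ) (i j : ι) :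
    Commute x ((shiftUnit M c).val i j) := by
  rw [shiftUnit_apply]
  refine (hx i j).add_right ?_
  split_ifs
  exacts [(intCast_sub_Tv_commute c x).symm, Commute.zero_right x]

lemma commute_shiftInv (hx : ∀ i j, Commute x (HahnSeries.C (M i j))) (c : ℤ) (i j : ι) :
    Commute x (shiftInv M c i j) :=
  commute_inv_apply (commute_shiftUnit hx c) i j

lemma commute_newtonSeries (hx : ∀ i j, Commute x (HahnSeries.C (M i j))) (p : ι → ℕ) (c : ℤ) :
    Commute x (newtonSeries p M c) :=
  (Commute.one_right x).add_right <| Commute.sum_right _ _ _ fun i _ =>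
    (commute_shiftInv hx c i i).smul_right _

lemma IsGl.commute_newtonSeries {p : ι → ℕ} (hM : IsGl p M) (c : ℤ) (i j : ι) :
    Commute (newtonSeries p M c) (HahnSeries.C (M i j)) := by
  have h := (hM.map HahnSeries.C).commute_strace_inv (intCast_sub_Tv_commute c)
    (shiftUnit_val M c) i j
  rw [Matrix.map_apply] at h
  exact (Commute.one_left _).add_left h

lemma IsGl.commute_C_shiftInv {p : ι → ℕ} (hM : IsGl p M) (c : ℤ) {x y i j : ι} (hij : p i = p j)
    (hi : i ≠ y) (hj : x ≠ j) : Commute (HahnSeries.C (M x y)) (shiftInv M c i j) := by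
  have h := (hM.map HahnSeries.C).mul_inv_apply (intCast_sub_Tv_commute c) (shiftUnit_val M c)
    x y i j
  rwa [if_neg hi, if_neg hj, sub_self, smul_zero, add_zero, hij,
    ((Even.add_self _).mul_left _).neg_one_pow, one_smul] at h

end Commute

end LaurentResolvent

section NewtonRecursion

variable {A : Type} {ι : Type*} [Ring A] [Fintype ι] [DecidableEq ι]

section Border

variable (E : Matrix (ι ⊕ Unit) (ι ⊕ Unit) A)

lemma shiftUnit_toBlocks₁₁ {κ : Type*} [Fintype κ] [DecidableEq κ]
    (E : Matrix (ι ⊕ κ) (ι ⊕ κ) A) (c : ℤ) :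
    (shiftUnit E.toBlocks₁₁ c).val = (shiftUnit E c).val.toBlocks₁₁ :=
  shiftUnit_submatrix E Sum.inl_injective c

lemma shiftInv_inr_mul_schurCompl (c : ℤ) :
    shiftInv E c (Sum.inr ()) (Sum.inr ()) *
      schurCompl (shiftUnit E c) (shiftUnit E.toBlocks₁₁ c) () () = 1 := by
  have h := congrFun₂ (toBlocks₂₂_inv_mul_schurCompl (shiftUnit_toBlocks₁₁ E c)) () ()
  rwa [Matrix.mul_apply, Fintype.sum_unique, Matrix.one_apply_eq] at h

lemma isUnit_shiftInv_inr (c : ℤ) : IsUnit (shiftInv E c (Sum.inr ()) (Sum.inr ())) := by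
  have h := congrFun₂ (schurCompl_mul_toBlocks₂₂_inv (shiftUnit_toBlocks₁₁ E c)) () ()
  rw [Matrix.mul_apply, Fintype.sum_unique, Matrix.one_apply_eq] at h
  exact ⟨⟨_, _, shiftInv_inr_mul_schurCompl E c, h⟩, rfl⟩

variable {E}

lemma IsGl.shiftInv_inr_mul_newtonSeries {p : ι ⊕ Unit → ℕ} (hE : IsGl p E) {c c' : ℤ}
    (hc : c' = c + (-1) ^ p (Sum.inr ())) :
    shiftInv E c (Sum.inr ()) (Sum.inr ()) * newtonSeries (p ∘ Sum.inl) E.toBlocks₁₁ c' =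
      newtonSeries p E c * shiftInv E c' (Sum.inr ()) (Sum.inr ()) := by
  have hM := shiftUnit_toBlocks₁₁ E c'
  have hd := shiftInv_inr_mul_schurCompl E c'
  set P := shiftInv E c'
  set d := schurCompl (shiftUnit E c') (shiftUnit E.toBlocks₁₁ c') () ()
  have hblock (i : ι) : shiftInv E.toBlocks₁₁ c' i i =
      P (Sum.inl i) (Sum.inl i) - P (Sum.inl i) (Sum.inr ()) * d * P (Sum.inr ()) (Sum.inl i) := by
    rw [shiftInv, inv_eq_toBlocks₁₁_inv_sub hM, Matrix.sub_apply, Matrix.mul_apply,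
      Fintype.sum_unique, Matrix.mul_apply, Fintype.sum_unique]
    rfl
  have hcc' : (c' : TSer A) - Tv =
      (c : TSer A) - Tv + (((-1 : ℤ) ^ p (Sum.inr ()) : ℤ) : TSer A) := by
    rw [hc, Int.cast_add, add_sub_right_comm]
  have hstr : strace (p ∘ Sum.inl) (shiftInv E.toBlocks₁₁ c') =
      ∑ i, (-1 : ℤ) ^ p i • (P i i - P i (Sum.inr ()) * d * P (Sum.inr ()) i) := by
    rw [Fintype.sum_sum_type, Finset.univ_unique (α := Unit), Finset.sum_singleton,
      PUnit.default_eq_unit, hd, one_mul, sub_self, smul_zero, add_zero]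
    exact Finset.sum_congr rfl fun i _ => congrArg _ (hblock i)
  rw [newtonSeries, hstr]
  exact (hE.map HahnSeries.C).inv_apply_mul_one_add_strace (intCast_sub_Tv_commute c')
    (intCast_sub_Tv_commute c) (shiftUnit_val E c') (shiftUnit_val E c) hcc' hd

end Border

section EvenFactor

variable {k : ℕ}

/-- The even factor of the Capelli Berezinian at `T - c`: the column determinant whose `t`-th
column is that of `E + c - t - T`. -/
def evenDet (E : Matrix (Fin k) (Fin k) A) (c : ℤ) : TSer A :=
  colDet fun t => (shiftUnit E (c - t)).val

lemma add_mul_add_sub_of_commute {R : Type*} [Ring R] {x y : R} (hx : ∀ z, Commute x z)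
    (hy : ∀ z, Commute y z) (e f : R) :
    (e + x) * (f + y) - (f + y) * (e + x) = e * f - f * e := by
  rw [add_mul e, (hx _).eq, mul_add (f + y), mul_add e, add_mul f y e, (hy e).eq]
  abel

lemma shiftUnit_sub_one (M : Matrix ι ι A) (c : ℤ) (i j : ι) :
    (shiftUnit M (c - 1)).val i j = (shiftUnit M c).val i j - if i = j then 1 else 0 := by
  rw [shiftUnit_apply, shiftUnit_apply, add_sub_assoc, Int.cast_sub, Int.cast_one, sub_right_comm]
  split_ifs
  exacts [rfl, by rw [sub_zero]]

lemma IsGl.isManin_shiftUnit {p : ι → ℕ} {E : Matrix ι ι A} (hE : IsGl p E) (hp : ∀ i, p i = 0)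
    (c : ℤ) : IsManin fun t : ℕ => (shiftUnit E (c - t)).val := by
  refine isManin_of_sub_eq fun t a b j l => ?_
  have hE' := hE.map (HahnSeries.C (Γ := ℤ)) a j b l
  simp only [Matrix.map_apply, hp, add_zero, mul_zero, pow_zero, one_smul, add_sub_assoc] at hE'
  have hT (d : ℤ) (i i' : ι) (z : TSer A) :
      Commute (if i = i' then (d : TSer A) - Tv else 0) z := by
    split_ifs
    exacts [intCast_sub_Tv_commute d z, Commute.zero_left z]
  have hmain := add_mul_add_sub_of_commute (hT (c - t) a j) (hT (c - t - 1) b l)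
    (HahnSeries.C (E a j)) (HahnSeries.C (E b l))
  rw [← shiftUnit_apply, ← shiftUnit_apply, hE', add_sub_cancel_left] at hmain
  simp only [Nat.cast_add, Nat.cast_one, ← sub_sub]
  rw [sub_eq_sub_iff_add_eq_add, ← eq_sub_iff_add_eq, add_sub_assoc, ← sub_eq_iff_eq_add', hmain,
    shiftUnit_sub_one, shiftUnit_sub_one, sub_mul, mul_sub, sub_sub_sub_cancel_left]
  simp only [ite_mul, mul_ite, one_mul, mul_one, zero_mul, mul_zero, shiftUnit_apply]
  simp only [eq_comm (a := j) (b := b), eq_comm (a := l) (b := a)]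
  split_ifs <;> simp only [add_sub_add_right_eq_sub, add_zero]

lemma commute_evenDet {E : Matrix (Fin k) (Fin k) A} {x : TSer A}
    (hx : ∀ i j, Commute x (HahnSeries.C (E i j))) (c : ℤ) : Commute x (evenDet E c) :=
  commute_colDet fun t _ => commute_shiftUnit hx (c - t)

section LastIndex

variable {E : Matrix (Fin (k + 1)) (Fin (k + 1)) A}

lemma IsGl.evenDet_castSucc (hE : IsGl (fun _ => 0) E) (c : ℤ) :
    evenDet (E.submatrix Fin.castSucc Fin.castSucc) c =
      evenDet E c * shiftInv E (c - k) (Fin.last k) (Fin.last k) := by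
  have h := (hE.isManin_shiftUnit (fun _ => rfl) c).colDet_castSucc (Units.mul_inv _)
  refine Eq.trans (congrArg colDet (funext fun t => ?_)) h
  exact shiftUnit_submatrix E (Fin.castSucc_injective k) (c - t)

/-- The splitting of the last index of `Fin (k + 1)` from the others. -/
def sumUnitEquivFin (k : ℕ) : Fin k ⊕ Unit ≃ Fin (k + 1) :=
  ((Equiv.refl (Fin k)).sumCongr finOneEquiv.symm).trans finSumFinEquiv

lemma shiftInv_submatrix_inr (c : ℤ) :
    shiftInv (E.submatrix (sumUnitEquivFin k) (sumUnitEquivFin k)) c (Sum.inr ()) (Sum.inr ()) =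
      shiftInv E c (Fin.last k) (Fin.last k) := by
  rw [shiftInv_submatrix_equiv]
  rfl

lemma isUnit_shiftInv_last (c : ℤ) : IsUnit (shiftInv E c (Fin.last k) (Fin.last k)) :=
  shiftInv_submatrix_inr (E := E) c ▸ isUnit_shiftInv_inr _ c

lemma IsGl.shiftInv_last_mul_newtonSeries (hE : IsGl (fun _ => 0) E) (c : ℤ) :
    shiftInv E c (Fin.last k) (Fin.last k) *
        newtonSeries (fun _ => 0) (E.submatrix Fin.castSucc Fin.castSucc) (c + 1) =
      newtonSeries (fun _ => 0) E c * shiftInv E (c + 1) (Fin.last k) (Fin.last k) := by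
  have hblock : (E.submatrix (sumUnitEquivFin k) (sumUnitEquivFin k)).toBlocks₁₁ =
      E.submatrix Fin.castSucc Fin.castSucc := rfl
  have h := (hE.submatrix (sumUnitEquivFin k).injective).shiftInv_inr_mul_newtonSeries (c := c)
    (c' := c + 1) (by rw [Function.comp_apply, pow_zero])
  rw [shiftInv_submatrix_inr, shiftInv_submatrix_inr, newtonSeries_submatrix_equiv, hblock] at h
  exact h

end LastIndex

lemma IsGl.evenDet_add_one {E : Matrix (Fin k) (Fin k) A} (hE : IsGl (fun _ => 0) E) (c : ℤ) :
    evenDet E (c + 1) = newtonSeries (fun _ => 0) E (c - k + 1) * evenDet E c := by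
  induction k generalizing c with
  | zero => simp [evenDet, colDet, newtonSeries, strace]
  | succ k ih =>
    have hE₀ : IsGl (fun _ => 0) (E.submatrix Fin.castSucc Fin.castSucc) :=
      hE.submatrix (Fin.castSucc_injective k)
    set E₀ := E.submatrix Fin.castSucc Fin.castSucc
    have hcomm : Commute (newtonSeries (fun _ => 0) E₀ (c - k + 1)) (evenDet E₀ c) :=
      commute_evenDet (hE₀.commute_newtonSeries _) c
    have hcomm' : Commute (newtonSeries (fun _ => 0) E (c - k)) (evenDet E c) :=
      commute_evenDet (hE.commute_newtonSeries _) c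
    refine (isUnit_shiftInv_last (E := E) (c - k + 1)).mul_right_cancel ?_
    calc evenDet E (c + 1) * shiftInv E (c - k + 1) (Fin.last k) (Fin.last k)
      _ = evenDet E₀ (c + 1) := by rw [hE.evenDet_castSucc, add_sub_right_comm]
      _ = evenDet E₀ c * newtonSeries (fun _ => 0) E₀ (c - k + 1) := by rw [ih hE₀, hcomm.eq]
      _ = evenDet E c * newtonSeries (fun _ => 0) E (c - k) *
            shiftInv E (c - k + 1) (Fin.last k) (Fin.last k) := by
        rw [hE.evenDet_castSucc, mul_assoc, hE.shiftInv_last_mul_newtonSeries, mul_assoc]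
      _ = newtonSeries (fun _ => 0) E (c - (k + 1 : ℕ) + 1) * evenDet E c *
            shiftInv E (c - k + 1) (Fin.last k) (Fin.last k) := by
        rw [← hcomm'.eq, Nat.cast_add, Nat.cast_one, ← sub_sub, sub_add_cancel]

end EvenFactor

end NewtonRecursion

section OddFactor

section SumFinSucc

variable (ι : Type*) (r : ℕ)

/-- The splitting of the first index of `Fin (r + 1)` from the others. -/
def sumFinSuccEquiv : (ι ⊕ Unit) ⊕ Fin r ≃ ι ⊕ Fin (r + 1) :=
  (Equiv.sumAssoc ι Unit (Fin r)).trans <| (Equiv.refl ι).sumCongr <|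
    (Equiv.sumComm Unit (Fin r)).trans <|
      (Equiv.optionEquivSumPUnit (Fin r)).symm.trans (finSuccEquiv r).symm

lemma sumFinSuccEquiv_inr (i : Fin r) : sumFinSuccEquiv ι r (Sum.inr i) = Sum.inr i.succ := by
  simp [sumFinSuccEquiv]

lemma sumFinSuccEquiv_comp_inl :
    sumFinSuccEquiv ι r ∘ Sum.inl = Sum.map id fun _ => 0 := by
  ext i
  rcases i with i | i <;> simp [sumFinSuccEquiv]

variable {ι r} {X : Type*} {f : ι ⊕ Fin (r + 1) → X} {x : X}

lemma comp_sumFinSuccEquiv_inr (hf : ∀ i, f (Sum.inr i) = x) (i : Fin r) :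
    (f ∘ sumFinSuccEquiv ι r) (Sum.inr i) = x :=
  (congrArg f (sumFinSuccEquiv_inr ι r i)).trans (hf _)

lemma comp_sumFinSuccEquiv_inl_inr (hf : ∀ i, f (Sum.inr i) = x) (i : Unit) :
    ((f ∘ sumFinSuccEquiv ι r) ∘ Sum.inl) (Sum.inr i) = x :=
  (congrArg f (congrFun (sumFinSuccEquiv_comp_inl ι r) (Sum.inr i))).trans (hf 0)

variable {A : Type*} [Ring A]

/-- The matrix `E` reindexed so that its first odd index is split off from the other odd ones. -/
abbrev splitFirst (E : Matrix (ι ⊕ Fin (r + 1)) (ι ⊕ Fin (r + 1)) A) :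
    Matrix ((ι ⊕ Unit) ⊕ Fin r) ((ι ⊕ Unit) ⊕ Fin r) A :=
  E.submatrix (sumFinSuccEquiv ι r) (sumFinSuccEquiv ι r)

lemma IsGl.isGl_splitFirst [DecidableEq ι] {p : ι ⊕ Fin (r + 1) → ℕ}
    {E : Matrix (ι ⊕ Fin (r + 1)) (ι ⊕ Fin (r + 1)) A} (hE : IsGl p E) :
    IsGl (p ∘ sumFinSuccEquiv ι r) (splitFirst E) :=
  hE.submatrix (sumFinSuccEquiv ι r).injective

end SumFinSucc

variable {A : Type} {ι κ : Type*} [Ring A] [Fintype ι] [DecidableEq ι] [Fintype κ] [DecidableEq κ]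
  {r : ℕ}

/-- The odd factor of the Capelli Berezinian: the column determinant whose `t`-th column is the
`t`-th row of the odd-odd block of `(E + c + t - T)⁻¹`. -/
def oddDet (E : Matrix (ι ⊕ Fin r) (ι ⊕ Fin r) A) (c : ℤ) : TSer A :=
  colDet fun t => (shiftInv E (c + t)).toBlocks₂₂.transpose

lemma commute_oddDet {E : Matrix (ι ⊕ Fin r) (ι ⊕ Fin r) A} {x : TSer A} {c : ℤ}
    (hx : ∀ t : ℕ, ∀ i j, Commute x (shiftInv E (c + t) (Sum.inr i) (Sum.inr j))) :
    Commute x (oddDet E c) :=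
  commute_colDet fun t _ i j => hx t j i

lemma IsGl.isManin_shiftInv {p : ι ⊕ κ → ℕ} {E : Matrix (ι ⊕ κ) (ι ⊕ κ) A} (hE : IsGl p E)
    (hp : ∀ i, p (Sum.inr i) = 1) (c : ℤ) :
    IsManin fun t : ℕ => (shiftInv E (c + t)).toBlocks₂₂.transpose := by
  refine isManin_of_sub_eq fun t a b j l => ?_
  have h := (hE.map HahnSeries.C).rtt (intCast_sub_Tv_commute (c + t))
    (intCast_sub_Tv_commute (c + (t + 1 : ℕ))) (shiftUnit_val E _) (shiftUnit_val E _)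
    (Sum.inr j) (Sum.inr a) (Sum.inr l) (Sum.inr b)
  have hT : ((c + t : ℤ) : TSer A) - Tv - (((c + (t + 1 : ℕ) : ℤ) : TSer A) - Tv) = -1 := by
    push_cast
    abel
  have s₁ : (-1 : ℤ) ^ ((1 + 1) * (1 + 1)) = 1 := by norm_num
  have s₂ : (-1 : ℤ) ^ (1 + (1 + 1) * (1 + 1)) = -1 := by norm_num
  rw [hT, hp, hp, hp, hp, s₁, s₂, one_smul, neg_one_smul, neg_one_mul, neg_inj,
    sub_eq_sub_iff_add_eq_add] at h
  rw [sub_eq_sub_iff_add_eq_add]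
  exact h.trans (add_comm _ _)

lemma IsGl.oddDet_succ {p : ι ⊕ Fin (r + 1) → ℕ}
    {E : Matrix (ι ⊕ Fin (r + 1)) (ι ⊕ Fin (r + 1)) A} (hE : IsGl p E)
    (hp : ∀ i, p (Sum.inr i) = 1) (c : ℤ) :
    oddDet (splitFirst E) (c + 1) =
      schurCompl (shiftUnit E c) (shiftUnit E.toBlocks₁₁ c) 0 0 * oddDet E c := by
  have hS : schurCompl (shiftUnit E c) (shiftUnit E.toBlocks₁₁ c) *
      (shiftInv E (c + (0 : ℕ))).toBlocks₂₂.transpose.transpose = 1 := by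
    rw [Nat.cast_zero, add_zero, Matrix.transpose_transpose]
    exact schurCompl_mul_toBlocks₂₂_inv (shiftUnit_toBlocks₁₁ E c)
  refine Eq.trans (congrArg colDet (funext fun t => ?_)) ((hE.isManin_shiftInv hp c).colDet_succ hS)
  ext1 i j
  rw [shiftInv_submatrix_equiv, Nat.cast_add, Nat.cast_one, add_assoc, add_comm 1 (t : ℤ)]
  simp only [Matrix.transpose_apply, Matrix.toBlocks₂₂, Matrix.of_apply, Matrix.submatrix_apply,
    sumFinSuccEquiv_inr]

lemma shiftInv_inr_mul_schurCompl_zero (E : Matrix (ι ⊕ Fin (r + 1)) (ι ⊕ Fin (r + 1)) A) (c : ℤ) :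
    shiftInv (splitFirst E).toBlocks₁₁ c (Sum.inr ()) (Sum.inr ()) *
      schurCompl (shiftUnit E c) (shiftUnit E.toBlocks₁₁ c) 0 0 = 1 := by
  have hF : (splitFirst E).toBlocks₁₁ =
      E.submatrix (Sum.map id fun _ => 0) (Sum.map id fun _ => 0) := by
    rw [← sumFinSuccEquiv_comp_inl]
    rfl
  have hinj : Function.Injective (Sum.map id fun _ => 0 : ι ⊕ Unit → ι ⊕ Fin (r + 1)) :=
    Function.injective_id.sumMap (Function.injective_of_subsingleton _)
  have h := shiftInv_inr_mul_schurCompl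
    (E.submatrix (Sum.map id fun _ => 0) (Sum.map id fun _ => 0)) c
  rw [schurCompl_submatrix (shiftUnit_submatrix E hinj c)] at h
  rw [hF]
  exact h

lemma IsGl.oddDet_eq_mul {p : ι ⊕ Fin (r + 1) → ℕ}
    {E : Matrix (ι ⊕ Fin (r + 1)) (ι ⊕ Fin (r + 1)) A} (hE : IsGl p E)
    (hp : ∀ i, p (Sum.inr i) = 1) (c : ℤ) :
    oddDet E c =
      shiftInv (splitFirst E).toBlocks₁₁ c (Sum.inr ()) (Sum.inr ()) *
        oddDet (splitFirst E) (c + 1) := by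
  rw [hE.oddDet_succ hp, ← mul_assoc, shiftInv_inr_mul_schurCompl_zero, one_mul]

lemma IsGl.commute_newtonSeries_shiftInv_inr {p : ι ⊕ κ → ℕ} {E : Matrix (ι ⊕ κ) (ι ⊕ κ) A}
    (hE : IsGl p E) (hp : ∀ i, p (Sum.inr i) = 1) (q : ι → ℕ) (c c' : ℤ) (a b : κ) :
    Commute (newtonSeries q E.toBlocks₁₁ c) (shiftInv E c' (Sum.inr a) (Sum.inr b)) :=
  (_root_.commute_newtonSeries (fun _ _ => (hE.commute_C_shiftInv c' ((hp a).trans (hp b).symm)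
    Sum.inr_ne_inl Sum.inl_ne_inr).symm) q c).symm

lemma IsGl.commute_newtonSeries_oddDet {p : ι ⊕ Fin r → ℕ} {E : Matrix (ι ⊕ Fin r) (ι ⊕ Fin r) A}
    (hE : IsGl p E) (hp : ∀ i, p (Sum.inr i) = 1) (q : ι → ℕ) (c c' : ℤ) :
    Commute (newtonSeries q E.toBlocks₁₁ c) (oddDet E c') :=
  commute_oddDet fun t => hE.commute_newtonSeries_shiftInv_inr hp q c (c' + t)

lemma IsGl.oddDet_add_one_mul_newtonSeries {p : ι ⊕ Fin (r + 1) → ℕ}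
    {E : Matrix (ι ⊕ Fin (r + 1)) (ι ⊕ Fin (r + 1)) A} (hE : IsGl p E)
    (hp : ∀ i, p (Sum.inr i) = 1) (c : ℤ) :
    oddDet E (c + 1) * newtonSeries (p ∘ Sum.inl) E.toBlocks₁₁ c =
      shiftInv (splitFirst E).toBlocks₁₁ c (Sum.inr ()) (Sum.inr ()) *
        (oddDet (splitFirst E) (c + 1 + 1) *
          newtonSeries ((p ∘ sumFinSuccEquiv ι r) ∘ Sum.inl) (splitFirst E).toBlocks₁₁
            (c + 1)) := by
  have hF : IsGl ((p ∘ sumFinSuccEquiv ι r) ∘ Sum.inl) (splitFirst E).toBlocks₁₁ :=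
    hE.isGl_splitFirst.submatrix Sum.inl_injective
  have hpF := comp_sumFinSuccEquiv_inl_inr hp
  set y := fun d => shiftInv (splitFirst E).toBlocks₁₁ d (Sum.inr ()) (Sum.inr ())
  set zF := newtonSeries ((p ∘ sumFinSuccEquiv ι r) ∘ Sum.inl) (splitFirst E).toBlocks₁₁
  set z := newtonSeries (p ∘ Sum.inl) E.toBlocks₁₁ c
  have hrec : y (c + 1) * z = zF (c + 1) * y c :=
    hF.shiftInv_inr_mul_newtonSeries (by rw [hpF, pow_one, add_neg_cancel_right])
  have hzy : Commute z (y (c + 1)) := hF.commute_newtonSeries_shiftInv_inr hpF _ _ _ _ _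
  have hzdet : Commute z (oddDet E (c + 1)) := hE.commute_newtonSeries_oddDet hp _ _ _
  have hzFy : Commute (zF (c + 1)) (y c) := commute_shiftInv (hF.commute_newtonSeries _) c _ _
  have hzFdet : Commute (zF (c + 1)) (oddDet (splitFirst E) (c + 1 + 1)) :=
    hE.isGl_splitFirst.commute_newtonSeries_oddDet (comp_sumFinSuccEquiv_inr hp) _ _ _
  calc oddDet E (c + 1) * z
    _ = z * y (c + 1) * oddDet (splitFirst E) (c + 1 + 1) := by
      rw [← hzdet.eq, hE.oddDet_eq_mul hp, mul_assoc]
    _ = y c * (oddDet (splitFirst E) (c + 1 + 1) * zF (c + 1)) := by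
      rw [hzy.eq, hrec, hzFy.eq, mul_assoc, hzFdet.eq]

lemma IsGl.oddDet_add_one {p : ι ⊕ Fin r → ℕ} {E : Matrix (ι ⊕ Fin r) (ι ⊕ Fin r) A}
    (hE : IsGl p E) (hp : ∀ i, p (Sum.inr i) = 1) (c : ℤ) :
    oddDet E (c + 1) * newtonSeries (p ∘ Sum.inl) E.toBlocks₁₁ c =
      newtonSeries p E (c + r) * oddDet E c := by
  induction r generalizing ι c with
  | zero =>
    have hz : newtonSeries (p ∘ Sum.inl) E.toBlocks₁₁ c = newtonSeries p E c :=
      newtonSeries_submatrix_equiv p E (Equiv.sumEmpty ι (Fin 0)).symm c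
    rw [hz, Nat.cast_zero, add_zero]
    simp [oddDet, colDet]
  | succ r ih =>
    have hzy : Commute (newtonSeries p E (c + (r + 1 : ℕ)))
        (shiftInv (splitFirst E).toBlocks₁₁ c (Sum.inr ()) (Sum.inr ())) := by
      rw [← newtonSeries_submatrix_equiv p E (sumFinSuccEquiv ι r)]
      exact commute_shiftInv (fun _ _ => hE.isGl_splitFirst.commute_newtonSeries _ _ _) c _ _
    rw [hE.oddDet_add_one_mul_newtonSeries hp, ih hE.isGl_splitFirst (comp_sumFinSuccEquiv_inr hp),
      newtonSeries_submatrix_equiv, add_assoc, add_comm 1 (r : ℤ), ← Nat.cast_succ, ← mul_assoc,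
      ← hzy.eq, mul_assoc, ← hE.oddDet_eq_mul hp]

end OddFactor

section CapelliBerezinian

variable {A : Type} [Ring A] [Algebra ℂ A] {m n : ℕ}

lemma intCast_smul_one (c : ℤ) : (c : ℂ) • (1 : TSer A) = (c : TSer A) := by
  rw [Int.cast_smul_eq_zsmul, zsmul_one]

lemma capelli_even_entry (F : Matrix (Ind m n) (Ind m n) A) (c : ℤ) (t i j : Fin m) :
    F.map HahnSeries.C (Sum.inl i) (Sum.inl j) -
        (if i = j then Tv - (c : TSer A) + ((t : ℕ) : ℂ) • 1 else 0) =
      (shiftUnit F.toBlocks₁₁ (c - (t : ℕ))).val i j := by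
  have ht : ((t : ℕ) : ℂ) • (1 : TSer A) = ((t : ℕ) : TSer A) := by
    rw [← Int.cast_natCast, intCast_smul_one, Int.cast_natCast]
  rw [shiftUnit_apply, ht, sub_eq_add_neg, Int.cast_sub, Int.cast_natCast, neg_ite]
  split_ifs
  · rw [neg_add, neg_sub, sub_right_comm, sub_eq_add_neg _ (((t : ℕ) : TSer A))]
    rfl
  · rw [neg_zero]
    rfl

lemma capelli_odd_matrix (F : Matrix (Ind m n) (Ind m n) A) (c : ℤ) (t : ℕ) :
    F.map HahnSeries.C - (Tv - (c : TSer A) + ((m : ℂ) - (t : ℂ) - 1) • 1) •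
        (1 : Matrix (Ind m n) (Ind m n) (TSer A)) =
      (shiftUnit F (c - m + 1 + t)).val := by
  have ht : ((m : ℂ) - (t : ℂ) - 1) • (1 : TSer A) = ((m - t - 1 : ℤ) : TSer A) := by
    rw [← intCast_smul_one]
    push_cast
    rfl
  have hs : -(Tv - (c : TSer A) + ((m - t - 1 : ℤ) : TSer A)) =
      ((c - m + 1 + t : ℤ) : TSer A) - Tv := by
    push_cast
    abel
  rw [shiftUnit_val, ht, sub_eq_add_neg, ← neg_smul, hs, Matrix.scalar_apply,
    Matrix.smul_one_eq_diagonal]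

lemma capelli_eq_evenDet_mul_oddDet (F : Matrix (Ind m n) (Ind m n) A) (c : ℤ) :
    capelli (F.map HahnSeries.C) (Tv - (c : TSer A)) =
      evenDet F.toBlocks₁₁ c * oddDet F (c - m + 1) := by
  simp only [capelli, capelli_even_entry, capelli_odd_matrix, Ring.inverse_unit]
  rfl

lemma IsGl.capelli_sub_add_one {F : Matrix (Ind m n) (Ind m n) A} (hF : IsGl pI F) (c : ℤ) :
    capelli (F.map HahnSeries.C) (Tv - ((c + 1 : ℤ) : TSer A)) =
      newtonSeries pI F (c - m + 1 + n) * capelli (F.map HahnSeries.C) (Tv - (c : TSer A)) := by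
  have hF₁₁ : IsGl (fun _ => 0) F.toBlocks₁₁ := hF.submatrix Sum.inl_injective
  have hodd : oddDet F (c - m + 1 + 1) *
        newtonSeries (fun _ => 0) F.toBlocks₁₁ (c - m + 1) =
      newtonSeries pI F (c - m + 1 + n) * oddDet F (c - m + 1) :=
    hF.oddDet_add_one (fun _ => rfl) (c - m + 1)
  have hcommOdd := hF.commute_newtonSeries_oddDet (fun _ => rfl) (fun _ => 0) (c - m + 1)
    (c - m + 1 + 1)
  have hcommEven : Commute (newtonSeries (fun _ => 0) F.toBlocks₁₁ (c - m + 1))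
      (evenDet F.toBlocks₁₁ c) := commute_evenDet (hF₁₁.commute_newtonSeries _) c
  have hcomm : Commute (newtonSeries pI F (c - m + 1 + n)) (evenDet F.toBlocks₁₁ c) :=
    commute_evenDet (fun _ _ => hF.commute_newtonSeries _ _ _) c
  rw [capelli_eq_evenDet_mul_oddDet, capelli_eq_evenDet_mul_oddDet, hF₁₁.evenDet_add_one,
    add_sub_right_comm, hcommEven.eq, mul_assoc, hcommOdd.eq, hodd, ← mul_assoc, ← hcomm.eq,
    mul_assoc]

end CapelliBerezinian

section GelfandInvariants

section GelfandSeries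

variable {A : Type} {ι : Type*} [Ring A] [Fintype ι] [DecidableEq ι]

/-- The series `∑ str (M ^ k) T ^ (-1 - k)` of supertraces of powers of `M`. -/
def gelfandSeries (p : ι → ℕ) (M : Matrix ι ι A) : TSer A :=
  HahnSeries.ofPowerSeries ℤ A (PowerSeries.mk fun k => strace p (M ^ k)) * HahnSeries.single 1 1

lemma strace_geomLaurent (p : ι → ℕ) (M : Matrix ι ι A) :
    strace p (geomLaurent M) = gelfandSeries p M := by
  have hmk : (PowerSeries.mk fun k => strace p (M ^ k)) = strace p (geomPowerSeries M) := by
    ext k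
    simp only [strace, geomPowerSeries, PowerSeries.coeff_mk, map_sum, map_zsmul, Matrix.of_apply]
  rw [gelfandSeries, hmk, strace, strace, map_sum, Finset.sum_mul]
  refine Finset.sum_congr rfl fun i _ => ?_
  rw [geomLaurent, Matrix.scalar_apply, Matrix.mul_diagonal, map_zsmul, smul_mul_assoc]
  rfl

lemma newtonSeries_zero (p : ι → ℕ) (M : Matrix ι ι A) :
    newtonSeries p M 0 = 1 - gelfandSeries p M := by
  have hinv : shiftInv M 0 = -geomLaurent (M + Matrix.scalar ι ((0 : ℤ) : A)) := rfl
  rw [Int.cast_zero, map_zero, add_zero] at hinv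
  rw [newtonSeries, hinv, ← strace_geomLaurent, sub_eq_add_neg, strace, strace,
    ← Finset.sum_neg_distrib]
  simp only [Matrix.neg_apply, smul_neg]

lemma strace_pI_one (m n : ℕ) :
    strace pI (1 : Matrix (Ind m n) (Ind m n) A) = ((m : ℤ) - n) • (1 : A) := by
  rw [strace, Fintype.sum_sum_type]
  simp [pI, sub_eq_add_neg]

end GelfandSeries

lemma neg_one_pow_complex_smul {M : Type*} [AddCommGroup M] [Module ℂ M] (q : ℕ) (x : M) :
    (-1 : ℂ) ^ q • x = (-1 : ℤ) ^ q • x := by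
  exact_mod_cast Int.cast_smul_eq_zsmul ℂ ((-1) ^ q) x

variable {ι A : Type} [Ring A]

/-- The matrix `((-1) ^ |i| e_ij)`. -/
def signedMatrix (p : ι → ℕ) (e : ι → ι → A) : Matrix ι ι A :=
  Matrix.of fun i j => (-1 : ℤ) ^ p i • e i j

lemma signedMatrix_apply (p : ι → ℕ) (e : ι → ι → A) (i j : ι) :
    signedMatrix p e i j = (-1 : ℤ) ^ p i • e i j := rfl

variable [DecidableEq ι] [Algebra ℂ A]

lemma isGl_signedMatrix {p : ι → ℕ} {e : ι → ι → A}
    (h : ∀ i j k l, e i j * e k l - (-1 : ℂ) ^ ((p i + p j) * (p k + p l)) • (e k l * e i j) =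
      (if j = k then e i l else 0)
        - (-1 : ℂ) ^ ((p i + p j) * (p k + p l)) • (if l = i then e k j else 0)) :
    IsGl p (signedMatrix p e) := by
  simp only [neg_one_pow_complex_smul, sub_eq_iff_eq_add] at h
  intro i j k l
  have sign₁ : (-1 : ℤ) ^ p k * ((-1) ^ p i * (-1) ^ ((p i + p j) * (p k + p l))) =
      (-1) ^ ((p i + p j) * (p k + p l)) * ((-1) ^ p i * (-1) ^ p k) := by ring
  have sign₂ : (-1 : ℤ) ^ ((p i + p j) * (p k + p l) + p i) * (-1) ^ p k =
      (-1) ^ ((p i + p j) * (p k + p l)) * ((-1) ^ p i * (-1) ^ p k) := by ring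
  simp only [signedMatrix_apply, smul_mul_assoc, mul_smul_comm, h i j k l, smul_add,
    smul_sub, smul_smul, smul_ite, smul_zero]
  rw [sign₁, sign₂]
  abel

lemma isGl_signedMatrix_gen (p : ι → ℕ) : IsGl p (signedMatrix p (gen p)) :=
  isGl_signedMatrix fun i j k l => by
    have h := RingQuot.mkAlgHom_rel ℂ (glRel.basic (p := p) i j k l)
    rwa [map_sub, map_sub, map_smul, map_mul, map_mul, map_smul, apply_ite (RingQuot.mkAlgHom ℂ _),
      apply_ite (RingQuot.mkAlgHom ℂ _), map_zero] at h

variable [Fintype ι]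

lemma rElt_one (e : ι → ι → A) (p : ι → ℕ) (a b : ι) : rElt e p 1 a b = e a b := by
  simp [rElt, chainF, Fin.snoc]

lemma rElt_succ_succ (e : ι → ι → A) (p : ι → ℕ) (k : ℕ) (a b : ι) :
    rElt e p (k + 2) a b = ∑ x, (-1 : ℤ) ^ p x • (e a x * rElt e p (k + 1) x b) := by
  simp only [rElt, ← neg_one_pow_complex_smul]
  rw [← (Fin.consEquiv fun _ => ι).sum_comp, Fintype.sum_prod_type]
  refine Finset.sum_congr rfl fun x _ => ?_
  rw [Finset.mul_sum, Finset.smul_sum]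
  refine Finset.sum_congr rfl fun v _ => ?_
  have hchain : chainF a b (Fin.cons (α := fun _ => ι) x v) = Fin.cons a (chainF x b v) := by
    rw [chainF, chainF, Fin.cons_snoc_eq_snoc_cons x v b]
  rw [Fin.consEquiv, Equiv.coe_fn_mk, hchain, List.ofFn_succ, List.prod_cons, Fin.sum_univ_succ,
    pow_add, mul_smul, mul_smul_comm]
  simp only [Fin.cons_zero, Fin.cons_succ, Fin.castSucc_zero, ← Fin.succ_castSucc]
  rfl

lemma neg_one_pow_smul_rElt (e : ι → ι → A) (p : ι → ℕ) (k : ℕ) (a b : ι) :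
    (-1 : ℤ) ^ p a • rElt e p (k + 1) a b = (signedMatrix p e ^ (k + 1)) a b := by
  induction k generalizing a with
  | zero => rw [zero_add, pow_one, rElt_one, signedMatrix_apply]
  | succ k ih =>
    rw [rElt_succ_succ, pow_succ', Matrix.mul_apply, Finset.smul_sum]
    refine Finset.sum_congr rfl fun x _ => ?_
    rw [← ih, signedMatrix_apply, smul_mul_assoc, mul_smul_comm]

lemma gelf_succ (e : ι → ι → A) (p : ι → ℕ) (k : ℕ) :
    gelf e p (k + 1) = strace p (signedMatrix p e ^ (k + 1)) :=
  Finset.sum_congr rfl fun i _ => by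
    rw [← neg_one_pow_smul_rElt, neg_one_pow_smul_smul]

lemma GelSer_eq_gelfandSeries (m n : ℕ) :
    GelSer m n = gelfandSeries pI (signedMatrix pI (gen pI)) := by
  rw [GelSer, gelfandSeries]
  congr 3
  funext k
  cases k with
  | zero => exact (strace_pI_one m n).symm
  | succ k => exact gelf_succ _ _ _

lemma scrE_eq_map_signedMatrix (m n : ℕ) (e : Ind m n → Ind m n → A) :
    scrE m n e = (signedMatrix pI e).map HahnSeries.C := by
  ext1 i j
  rw [scrE, neg_one_pow_complex_smul]
  rfl

end GelfandInvariants

theorem stmt13_general {A : Type} [Ring A] [Algebra ℂ A] {m n : ℕ}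
    {F : Matrix (Ind m n) (Ind m n) A} (hF : IsGl pI F) :
    capelli (F.map HahnSeries.C) (Tv - ((m : ℂ) - n) • 1) =
      (1 - gelfandSeries pI F) * capelli (F.map HahnSeries.C) (Tv - ((m : ℂ) - n) • 1 + 1) := by
  have hmn : ((m : ℂ) - n) • (1 : TSer A) = ((m - n - 1 + 1 : ℤ) : TSer A) := by
    rw [← intCast_smul_one]
    push_cast
    rw [sub_add_cancel]
  have hc : (m - n - 1 - m + 1 + n : ℤ) = 0 := by ring
  have hshift : Tv - ((m - n - 1 + 1 : ℤ) : TSer A) + 1 = Tv - ((m - n - 1 : ℤ) : TSer A) := by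
    rw [Int.cast_add, Int.cast_one, ← sub_sub, sub_add_cancel]
  rw [hmn, hF.capelli_sub_add_one, hc, newtonSeries_zero, hshift]

/-- Theorem 5.4, Newton's formula for `gl(m|n)`.  As Laurent series in `T`
with central coefficients:
`C_{m|n}(T−(m−n)) / C_{m|n}(T−(m−n)+1) = 1 − Σ_{k=0}^∞ G_k T^{−1−k}`. -/
theorem stmt13 (m n : ℕ) :
    capelli (scrE m n (gen pI)) (Tv - ((((m : ℂ) - n)) • 1)) =
      (1 - GelSer m n) *
        capelli (scrE m n (gen pI)) (Tv - ((((m : ℂ) - n)) • 1) + 1) := by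
  rw [GelSer_eq_gelfandSeries, scrE_eq_map_signedMatrix]
  exact stmt13_general (isGl_signedMatrix_gen pI)
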